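/- arXiv:2505.10555 — 3 statements merged into one kernel-verified Lean document; each statement's English description precedes it below -/
import Mathlib

section
/- There is an absolute constant C > 0 such that for every n ≥ 1 and all unit vectors u, v ∈ ℝⁿ, if G is a GOTE(4,n) tensor and ℙ_{u,v} denotes the law on ℝ^{n(n+1)/2} of the vector of upper-triangular entries ((G·u⊗v)_{ij})_{1 ≤ i ≤ j ≤ n}, then d_TV(ℙ_{u,v}, ℙ_{u,u}) ≤ C·n·‖u − v‖₂, where d_TV(μ,ν) = sup_{A measurable} |μ(A) − ν(A)| is the total variation distance. -/
open MeasureTheory ProbabilityTheory Filter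

noncomputable section

/-- The size-`r` multiset of entries of a tuple `a : Fin r → Fin n`. -/
def tupleSym {n r : ℕ} (a : Fin r → Fin n) : Sym (Fin n) r :=
  ⟨(List.ofFn a : Multiset (Fin n)), by simp⟩

/-- `#Perm(a)`: the number of tuples with the same multiset of entries as `a`. -/
def permCount {n r : ℕ} (a : Fin r → Fin n) : ℕ :=
  (Finset.univ.filter (fun b : Fin r → Fin n => tupleSym b = tupleSym a)).card

/-- The sample space for a GOTE(r,n) tensor: one standard Gaussian coordinate for each
size-`r` multiset of indices. -/
abbrev GoteSpace (r n : ℕ) : Type := Sym (Fin n) r → ℝ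

/-- The law of the coordinates of a GOTE(r,n) tensor: a product of standard Gaussians. -/
def goteMeasure (r n : ℕ) : Measure (GoteSpace r n) :=
  Measure.pi fun _ => gaussianReal 0 1

instance (r n : ℕ) : IsProbabilityMeasure (goteMeasure r n) := by
  unfold goteMeasure; infer_instance

/-- The entries of the GOTE(r,n) tensor built from the Gaussian coordinates `ω`. -/
def gote {r n : ℕ} (ω : GoteSpace r n) (a : Fin r → Fin n) : ℝ :=
  Real.sqrt ((r : ℝ) / (permCount a : ℝ)) * ω (tupleSym a)

/-- The index tuple `(i, j, f 0, …, f (r-3))`. -/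
def glue {n r : ℕ} (i j : Fin n) (f : Fin (r - 2) → Fin n) : Fin r → Fin n :=
  fun t =>
    if h0 : (t : ℕ) = 0 then i
    else if h1 : (t : ℕ) = 1 then j
    else f ⟨(t : ℕ) - 2, by have := t.isLt; omega⟩

/-- The pure contraction `G ⬝ w^{⊗(r-2)}`, an `n × n` random symmetric matrix. -/
def pureContraction {r n : ℕ} (ω : GoteSpace r n) (w : Fin n → ℝ) :
    Matrix (Fin n) (Fin n) ℝ :=
  fun i j => ∑ f : Fin (r - 2) → Fin n, gote ω (glue i j f) * ∏ k, w (f k)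

open Classical in
/-- The eigenvalues (in some order) of a matrix, defined for symmetric matrices via the
spectral theorem and as `0` otherwise. -/
def eigsOf {n : ℕ} (A : Matrix (Fin n) (Fin n) ℝ) : Fin n → ℝ :=
  if h : A.IsHermitian then h.eigenvalues else 0

/-- The largest eigenvalue `λ₁` of a symmetric matrix. -/
def lambdaMax {n : ℕ} (A : Matrix (Fin n) (Fin n) ℝ) : ℝ := ⨆ i, eigsOf A i

/-- The smallest eigenvalue `λₙ` of a symmetric matrix. -/
def lambdaMin {n : ℕ} (A : Matrix (Fin n) (Fin n) ℝ) : ℝ := ⨅ i, eigsOf A i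

/-- The semicircle distribution with variance `σ²` (parameter `s = σ²`). -/
def semicircle (s : ℝ) : Measure ℝ :=
  volume.withDensity fun x => ENNReal.ofReal (Real.sqrt (4 * s - x ^ 2) / (2 * Real.pi * s))

end

/-- The mixed contraction `G·u⊗v` of a GOTE(4,n) tensor: the `n × n` random symmetric
matrix with entries `(G·u⊗v)_{ij} = Σ_{a,b} G_{i,j,a,b} u_a v_b`. -/
noncomputable def mixedContraction {n : ℕ} (ω : GoteSpace 4 n) (u v : Fin n → ℝ) :
    Matrix (Fin n) (Fin n) ℝ :=
  fun i j => ∑ a : Fin n, ∑ b : Fin n, gote ω ![i, j, a, b] * u a * v b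

/-- The total variation distance between two measures:
`sup_A |μ(A) − ν(A)|` over measurable sets `A`. -/
noncomputable def tvDist {X : Type*} [MeasurableSpace X] (μ ν : Measure X) : ℝ :=
  ⨆ A : {A : Set X // MeasurableSet A}, |(μ A.1).toReal - (ν A.1).toReal|

/-- The law on `ℝ^{n(n+1)/2}` of the upper-triangular entries of the mixed contraction
`G·u⊗v` of a GOTE(4,n) tensor. -/
noncomputable def mixedUpperLaw (n : ℕ) (u v : Fin n → ℝ) :
    Measure ({p : Fin n × Fin n // p.1 ≤ p.2} → ℝ) :=
  Measure.map (fun ω (p : {p : Fin n × Fin n // p.1 ≤ p.2}) =>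
    mixedContraction ω u v p.1.1 p.1.2) (goteMeasure 4 n)


open scoped NNReal ENNReal

section absfib
variable {τ M : Type*} [Fintype τ] [Fintype M] [DecidableEq M]

def fibN (s : τ → M) (m : M) : ℕ := (Finset.univ.filter (fun q => s q = m)).card

noncomputable def fibL (s : τ → M) (T : τ → ℝ) (m : M) : ℝ :=
  ∑ q, if s q = m then √(4 / (fibN s (s q) : ℝ)) * T q else 0

lemma fibL_eq (s : τ → M) (T : τ → ℝ) (m : M) :
    fibL s T m = √(4 / (fibN s m : ℝ)) * ∑ q ∈ Finset.univ.filter (fun q => s q = m), T q := by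
  rw [fibL, Finset.mul_sum, Finset.sum_filter]
  refine Finset.sum_congr rfl fun q _ => ?_
  split_ifs with h
  · rw [h]
  · rfl

lemma fibL_sub (s : τ → M) (T T' : τ → ℝ) (m : M) :
    fibL s T m - fibL s T' m = fibL s (fun q => T q - T' q) m := by
  simp only [fibL_eq, Finset.sum_sub_distrib, mul_sub]

lemma fibL_upper (s : τ → M) (T : τ → ℝ) :
    ∑ m, fibL s T m ^ 2 ≤ 4 * ∑ q, T q ^ 2 := by
  rw [← Finset.sum_fiberwise Finset.univ s (fun q => T q ^ 2), Finset.mul_sum]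
  refine Finset.sum_le_sum fun m _ => ?_
  rw [fibL_eq, mul_pow, Real.sq_sqrt (by positivity)]
  have h := sq_sum_le_card_mul_sum_sq (s := Finset.univ.filter (fun q => s q = m)) (f := T)
  change _ ≤ (fibN s m : ℝ) * _ at h
  have h0 : 0 ≤ ∑ q ∈ Finset.univ.filter (fun q => s q = m), T q ^ 2 := by positivity
  calc _ ≤ 4 / (fibN s m : ℝ) * ((fibN s m : ℝ) * ∑ q ∈ Finset.univ.filter (fun q => s q = m), T q ^ 2) := by gcongr
    _ = (4 / (fibN s m : ℝ) * (fibN s m : ℝ)) * ∑ q ∈ Finset.univ.filter (fun q => s q = m), T q ^ 2 := by ring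
    _ ≤ _ := by
      gcongr
      by_cases hN : (fibN s m : ℝ) = 0
      · rw [hN]; norm_num
      · rw [div_mul_cancel₀ _ hN]

lemma fibL_lower (s : τ → M) (T : τ → ℝ) (S : M → ℝ) :
    (∑ q, T q * S (s q)) ^ 2 ≤ (∑ m, fibL s T m ^ 2) * ((∑ q, S (s q) ^ 2) / 4) := by
  have h1 : ∑ q, T q * S (s q) = ∑ m, fibL s T m * (√((fibN s m : ℝ) / 4) * S m) := by
    rw [← Finset.sum_fiberwise Finset.univ s (fun q => T q * S (s q))]
    refine Finset.sum_congr rfl fun m _ => ?_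
    have : ∑ q ∈ Finset.univ.filter (fun q => s q = m), T q * S (s q)
        = (∑ q ∈ Finset.univ.filter (fun q => s q = m), T q) * S m := by
      rw [Finset.sum_mul]
      refine Finset.sum_congr rfl fun q hq => ?_
      rw [(Finset.mem_filter.1 hq).2]
    rw [this, fibL_eq]
    by_cases hN : fibN s m = 0
    · have : Finset.univ.filter (fun q => s q = m) = ∅ := Finset.card_eq_zero.1 hN
      rw [this]; simp
    · have hN' : (0:ℝ) < fibN s m := by positivity
      have : √(4 / (fibN s m : ℝ)) * √((fibN s m : ℝ) / 4) = 1 := by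
        rw [← Real.sqrt_mul (by positivity)]
        rw [show 4 / (fibN s m : ℝ) * ((fibN s m : ℝ) / 4) = 1 by field_simp, Real.sqrt_one]
      linear_combination (-(∑ q ∈ Finset.univ.filter (fun q => s q = m), T q) * S m) * this
  have h2 : (∑ q, S (s q) ^ 2) / 4 = ∑ m, (√((fibN s m : ℝ) / 4) * S m) ^ 2 := by
    rw [← Finset.sum_fiberwise Finset.univ s (fun q => S (s q) ^ 2), Finset.sum_div]
    refine Finset.sum_congr rfl fun m _ => ?_
    have : ∑ q ∈ Finset.univ.filter (fun q => s q = m), S (s q) ^ 2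
        = ∑ q ∈ Finset.univ.filter (fun q => s q = m), S m ^ 2 := by
      refine Finset.sum_congr rfl fun q hq => ?_
      rw [(Finset.mem_filter.1 hq).2]
    rw [this, mul_pow, Real.sq_sqrt (by positivity), Finset.sum_const, nsmul_eq_mul]
    change (fibN s m : ℝ) * _ / 4 = _
    ring
  rw [h1, h2]
  exact Finset.sum_mul_sq_le_sq_mul_sq _ _ _

end absfib

/-- symmetric test function -/
def symF {n : ℕ} (C : Fin n → Fin n → ℝ) (u : Fin n → ℝ) (a : Fin 4 → Fin n) : ℝ :=
  (C (a 0) (a 1) + C (a 1) (a 0)) * u (a 2) * u (a 3)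
  + (C (a 2) (a 3) + C (a 3) (a 2)) * u (a 0) * u (a 1)
  + (C (a 0) (a 2) + C (a 2) (a 0)) * u (a 1) * u (a 3)
  + (C (a 0) (a 3) + C (a 3) (a 0)) * u (a 1) * u (a 2)
  + (C (a 1) (a 2) + C (a 2) (a 1)) * u (a 0) * u (a 3)
  + (C (a 1) (a 3) + C (a 3) (a 1)) * u (a 0) * u (a 2)

lemma symF_swap {n : ℕ} (C : Fin n → Fin n → ℝ) (u : Fin n → ℝ) (a : Fin 4 → Fin n)
    (x y : Fin 4) : symF C u (a ∘ Equiv.swap x y) = symF C u a := by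
  fin_cases x <;> fin_cases y <;> simp [symF, Equiv.swap_apply_def] <;> ring

lemma symF_perm {n : ℕ} (C : Fin n → Fin n → ℝ) (u : Fin n → ℝ) (σ : Equiv.Perm (Fin 4)) :
    ∀ a : Fin 4 → Fin n, symF C u (a ∘ σ) = symF C u a := by
  induction σ using Equiv.Perm.swap_induction_on with
  | one => intro a; rfl
  | swap_mul f x y hxy ih =>
    intro a
    have : a ∘ (Equiv.swap x y * f : Equiv.Perm (Fin 4)) = (a ∘ Equiv.swap x y) ∘ f := rfl
    rw [this, ih, symF_swap]

lemma symF_congr {n : ℕ} (C : Fin n → Fin n → ℝ) (u : Fin n → ℝ) (a b : Fin 4 → Fin n)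
    (h : tupleSym a = tupleSym b) : symF C u a = symF C u b := by
  have h1 : ((List.ofFn a : List (Fin n)) : Multiset (Fin n)) = (List.ofFn b : List (Fin n)) :=
    congrArg Subtype.val h
  have hp : (List.ofFn a).Perm (List.ofFn b) := Multiset.coe_eq_coe.1 h1
  have hl : List.ofFn (a ∘ Tuple.sort a) = List.ofFn (b ∘ Tuple.sort b) :=
    ((((Tuple.sort a).ofFn_comp_perm a).trans hp).trans
      ((Tuple.sort b).ofFn_comp_perm b).symm).eq_of_pairwise'
        (Tuple.monotone_sort a).sortedLE_ofFn.pairwise (Tuple.monotone_sort b).sortedLE_ofFn.pairwise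
  have hc : a ∘ Tuple.sort a = b ∘ Tuple.sort b := List.ofFn_injective hl
  rw [← symF_perm C u (Tuple.sort a) a, hc, symF_perm]

abbrev Quad (n : ℕ) := Fin n × Fin n × Fin n × Fin n

def tp {n : ℕ} (q : Quad n) : Fin 4 → Fin n := ![q.1, q.2.1, q.2.2.1, q.2.2.2]

def tpEquiv (n : ℕ) : Quad n ≃ (Fin 4 → Fin n) where
  toFun := tp
  invFun a := (a 0, a 1, a 2, a 3)
  left_inv q := by simp [tp]
  right_inv a := by
    ext i; fin_cases i <;> simp [tp]

lemma permCount_tp {n : ℕ} (q : Quad n) :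
    permCount (tp q) = fibN (fun q : Quad n => tupleSym (tp q)) (tupleSym (tp q)) := by
  unfold permCount fibN
  symm
  refine Finset.card_equiv (tpEquiv n) ?_
  intro q'
  simp [tpEquiv]

lemma symF_norm {n : ℕ} (C : Fin n → Fin n → ℝ) (u : Fin n → ℝ) (hu : ∑ i, u i ^ 2 = 1) :
    ∑ q : Quad n, symF C u (tp q) ^ 2 ≤ 144 * ∑ i, ∑ j, C i j ^ 2 := by
  have h6 : ∀ q : Quad n, symF C u (tp q) ^ 2 ≤ 6 * (
     (C q.1 q.2.1 + C q.2.1 q.1)^2 * u q.2.2.1 ^2 * u q.2.2.2 ^ 2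
     + (C q.2.2.1 q.2.2.2 + C q.2.2.2 q.2.2.1)^2 * u q.1 ^2 * u q.2.1 ^ 2
     + (C q.1 q.2.2.1 + C q.2.2.1 q.1)^2 * u q.2.1 ^2 * u q.2.2.2 ^ 2
     + (C q.1 q.2.2.2 + C q.2.2.2 q.1)^2 * u q.2.1 ^2 * u q.2.2.1 ^ 2
     + (C q.2.1 q.2.2.1 + C q.2.2.1 q.2.1)^2 * u q.1 ^2 * u q.2.2.2 ^ 2
     + (C q.2.1 q.2.2.2 + C q.2.2.2 q.2.1)^2 * u q.1 ^2 * u q.2.2.1 ^ 2) := by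
    rintro ⟨i, j, a, b⟩
    have key : ∀ x1 x2 x3 x4 x5 x6 : ℝ, (x1 + x2 + x3 + x4 + x5 + x6)^2
      ≤ 6 * (x1^2 + x2^2+x3^2+x4^2+x5^2+x6^2) := by
      intro x1 x2 x3 x4 x5 x6
      have := sq_sum_le_card_mul_sum_sq (s := Finset.univ) (f := ![x1,x2,x3,x4,x5,x6])
      simpa [Fin.sum_univ_succ, add_assoc] using this
    refine (key _ _ _ _ _ _).trans (le_of_eq ?_)
    simp [tp, mul_pow]
  refine (Finset.sum_le_sum fun q _ => h6 q).trans ?_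
  rw [← Finset.mul_sum]
  simp only [Fintype.sum_prod_type, Finset.sum_add_distrib]
  simp only [← Finset.mul_sum, ← Finset.sum_mul, hu, mul_one]
  have hA : ∑ i, ∑ j, (C i j + C j i) ^ 2 ≤ 4 * ∑ i, ∑ j, C i j ^ 2 := by
    have : 4 * ∑ i, ∑ j, C i j ^ 2 = ∑ i, ∑ j, (2 * C i j ^ 2 + 2 * C j i ^ 2) := by
      simp only [Finset.sum_add_distrib, ← Finset.mul_sum]
      rw [Finset.sum_comm (f := fun i j => C j i ^ 2)]
      ring
    rw [this]
    refine Finset.sum_le_sum fun i _ => Finset.sum_le_sum fun j _ => ?_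
    nlinarith [sq_nonneg (C i j - C j i)]
  linarith

lemma symF_inner {n : ℕ} (C : Fin n → Fin n → ℝ) (u : Fin n → ℝ) (hu : ∑ i, u i ^ 2 = 1)
    (hC : ∀ i j, 0 ≤ C i j * C j i) :
    ∑ i, ∑ j, C i j ^ 2 ≤ ∑ q : Quad n, (C q.1 q.2.1 * u q.2.2.1 * u q.2.2.2) * symF C u (tp q) := by
  set A : Fin n → Fin n → ℝ := fun i j => C i j + C j i with hA
  set w : Fin n → ℝ := fun i => ∑ a, A i a * u a with hw
  set t : ℝ := ∑ a, u a * w a with ht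
  have hAs : ∀ i j, A i j = A j i := fun i j => by simp only [hA]; ring
  have hin : ∀ i j, ∑ a, ∑ b, (C i j * u a * u b) * symF C u (tp (i, j, a, b))
      = C i j * (A i j + t * u i * u j + 2 * w i * u j + 2 * w j * u i) := by
    intro i j
    have e : ∀ a b, (C i j * u a * u b) * symF C u (tp (i, j, a, b))
      = C i j * A i j * u a ^ 2 * u b ^ 2 + C i j * u i * u j * (u a * (A a b * u b))
        + C i j * u j * (A i a * u a) * u b ^ 2 + C i j * u j * u a ^ 2 * (A i b * u b)
        + C i j * u i * (A j a * u a) * u b ^ 2 + C i j * u i * u a ^ 2 * (A j b * u b) := by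
      intro a b
      simp [symF, tp, hA]
      ring
    simp only [e, Finset.sum_add_distrib]
    simp only [← Finset.mul_sum, ← Finset.sum_mul, hu, mul_one]
    change C i j * A i j + C i j * u i * u j * t + C i j * u j * w i + C i j * u j * w i
      + C i j * u i * w j + C i j * u i * w j = _
    ring
  simp only [Fintype.sum_prod_type, hin]
  set B : Fin n → Fin n → ℝ := fun i j => A i j + t * u i * u j + 2 * w i * u j + 2 * w j * u i with hB
  have hBs : ∀ i j, B j i = B i j := fun i j => by simp only [hB, hAs j i]; ring
  have h2 : 2 * ∑ i, ∑ j, C i j * B i j = ∑ i, ∑ j, A i j * B i j := by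
    have : ∑ i, ∑ j, C i j * B i j = ∑ i, ∑ j, C j i * B i j := by
      rw [Finset.sum_comm]
      simp only [hBs]
    simp only [hA, add_mul, Finset.sum_add_distrib]
    linarith
  have h3 : ∑ i, ∑ j, A i j * B i j = ∑ i, ∑ j, A i j ^ 2 + t ^ 2 + 4 * ∑ i, w i ^ 2 := by
    have e : ∀ i j, A i j * B i j = A i j ^ 2 + t * (u i * (A i j * u j)) + 2 * w i * (A i j * u j)
      + 2 * w j * (A j i * u i) := by
      intro i j
      simp only [hB]
      rw [hAs j i]; ring
    simp only [e, Finset.sum_add_distrib]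
    rw [Finset.sum_comm (f := fun i j => 2 * w j * (A j i * u i))]
    simp only [← Finset.mul_sum]
    change _ + t * t + ∑ i, 2 * w i * w i + ∑ i, 2 * w i * w i = _
    have : ∑ i, 2 * w i * w i = 2 * ∑ i, w i ^ 2 := by
      rw [Finset.mul_sum]; exact Finset.sum_congr rfl fun i _ => by ring
    rw [this]; ring
  have h4 : 2 * ∑ i, ∑ j, C i j ^ 2 ≤ ∑ i, ∑ j, A i j ^ 2 := by
    have : 2 * ∑ i, ∑ j, C i j ^ 2 = ∑ i, ∑ j, (C i j ^ 2 + C j i ^ 2) := by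
      simp only [Finset.sum_add_distrib]
      rw [Finset.sum_comm (f := fun i j => C j i ^ 2)]
      ring
    rw [this]
    refine Finset.sum_le_sum fun i _ => Finset.sum_le_sum fun j _ => ?_
    simp only [hA]
    nlinarith [hC i j]
  have h5 : 0 ≤ ∑ i, w i ^ 2 := by positivity
  have h6 := sq_nonneg t
  change _ ≤ ∑ i, ∑ j, C i j * B i j
  linarith

lemma quad_norm {n : ℕ} (C : Fin n → Fin n → ℝ) (u v : Fin n → ℝ) :
    ∑ q : Quad n, (C q.1 q.2.1 * u q.2.2.1 * v q.2.2.2) ^ 2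
      = (∑ i, ∑ j, C i j ^ 2) * (∑ i, u i ^ 2) * (∑ i, v i ^ 2) := by
  simp only [Fintype.sum_prod_type, mul_pow]
  simp only [← Finset.mul_sum, ← Finset.sum_mul]

/-- tensor coefficient functional -/
noncomputable def LL {n : ℕ} (C : Fin n → Fin n → ℝ) (u v : Fin n → ℝ) : Sym (Fin n) 4 → ℝ :=
  fibL (fun q : Quad n => tupleSym (tp q)) (fun q => C q.1 q.2.1 * u q.2.2.1 * v q.2.2.2)

lemma LL_lower {n : ℕ} (C : Fin n → Fin n → ℝ) (u : Fin n → ℝ) (hu : ∑ i, u i ^ 2 = 1)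
    (hC : ∀ i j, 0 ≤ C i j * C j i) :
    ∑ i, ∑ j, C i j ^ 2 ≤ 36 * ∑ m, LL C u u m ^ 2 := by
  classical
  obtain ⟨S, hS⟩ : ∃ S : Sym (Fin n) 4 → ℝ, ∀ q : Quad n, symF C u (tp q) = S (tupleSym (tp q)) := by
    have hf : Function.FactorsThrough (fun q : Quad n => symF C u (tp q))
      (fun q => tupleSym (tp q)) := fun a b h => symF_congr C u _ _ h
    exact ⟨Function.extend (fun q : Quad n => tupleSym (tp q)) (fun q => symF C u (tp q)) 0, fun q => (hf.extend_apply 0 q).symm⟩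
  have h1 := fibL_lower (fun q : Quad n => tupleSym (tp q)) (fun q => C q.1 q.2.1 * u q.2.2.1 * u q.2.2.2) S
  simp only [← hS] at h1
  have h2 := symF_norm C u hu
  have h3 := symF_inner C u hu hC
  change _ ≤ (∑ m, LL C u u m ^ 2) * _ at h1
  set c := ∑ i, ∑ j, C i j ^ 2
  set Q := ∑ m, LL C u u m ^ 2
  have hQ : 0 ≤ Q := by positivity
  have hc : 0 ≤ c := by positivity
  rcases hc.eq_or_lt with h0 | h0
  · rw [← h0]; positivity
  have h5 : c ^ 2 ≤ Q * (36 * c) := by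
    calc c ^ 2 ≤ _ := pow_le_pow_left₀ hc h3 2
      _ ≤ _ := h1
      _ ≤ _ := by gcongr; linarith
  nlinarith

lemma LL_diff {n : ℕ} (C : Fin n → Fin n → ℝ) (u v : Fin n → ℝ) (hu : ∑ i, u i ^ 2 = 1)
    (hv : ∑ i, v i ^ 2 = 1) :
    |∑ m, LL C u v m ^ 2 - ∑ m, LL C u u m ^ 2|
      ≤ 8 * Real.sqrt (∑ i, (u i - v i) ^ 2) * ∑ i, ∑ j, C i j ^ 2 := by
  have h1 : ∑ m, LL C u v m ^ 2 ≤ 4 * ∑ i, ∑ j, C i j ^ 2 := by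
    refine (fibL_upper _ _).trans ?_
    rw [quad_norm, hu, hv]; simp
  have h2 : ∑ m, LL C u u m ^ 2 ≤ 4 * ∑ i, ∑ j, C i j ^ 2 := by
    refine (fibL_upper _ _).trans ?_
    rw [quad_norm, hu]; simp
  have h3 : ∑ m, (LL C u v m - LL C u u m) ^ 2
      ≤ 4 * ((∑ i, ∑ j, C i j ^ 2) * ∑ i, (u i - v i) ^ 2) := by
    simp only [LL, fibL_sub]
    refine (fibL_upper _ _).trans ?_
    have := quad_norm C u (fun i => v i - u i)
    simp only [← mul_sub]
    rw [this, hu, mul_one]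
    refine le_of_eq ?_
    congr 2
    exact Finset.sum_congr rfl fun i _ => by ring
  set c := ∑ i, ∑ j, C i j ^ 2
  set δ := ∑ i, (u i - v i) ^ 2
  have hc : 0 ≤ c := by positivity
  have hδ : 0 ≤ δ := by positivity
  have h4 : ∑ m, (LL C u v m + LL C u u m) ^ 2 ≤ 16 * c := by
    have : ∑ m, (LL C u v m + LL C u u m) ^ 2 ≤ ∑ m, (2 * LL C u v m ^ 2 + 2 * LL C u u m ^ 2) :=
      Finset.sum_le_sum fun m _ => by nlinarith [sq_nonneg (LL C u v m - LL C u u m)]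
    rw [Finset.sum_add_distrib, ← Finset.mul_sum, ← Finset.mul_sum] at this
    linarith
  have h5 : ∑ m, LL C u v m ^ 2 - ∑ m, LL C u u m ^ 2
      = ∑ m, (LL C u v m - LL C u u m) * (LL C u v m + LL C u u m) := by
    rw [← Finset.sum_sub_distrib]
    exact Finset.sum_congr rfl fun m _ => by ring
  rw [h5]
  apply abs_le_of_sq_le_sq _ (by positivity)
  refine (Finset.sum_mul_sq_le_sq_mul_sq _ _ _).trans ?_
  calc _ ≤ (4 * (c * δ)) * (16 * c) := by gcongr
    _ = _ := by rw [mul_pow, mul_pow, Real.sq_sqrt hδ]; ring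
noncomputable def gdens (l : ℝ≥0) (x : ℝ) : ℝ := gaussianPDFReal 0 l x / gaussianPDFReal 0 1 x

lemma gdens_meas (l : ℝ≥0) : Measurable (gdens l) :=
  (measurable_gaussianPDFReal 0 l).div (measurable_gaussianPDFReal 0 1)

lemma gdens_nonneg (l : ℝ≥0) (x : ℝ) : 0 ≤ gdens l x :=
  div_nonneg (gaussianPDFReal_nonneg _ _ _) (gaussianPDFReal_nonneg _ _ _)

lemma gdens_withDensity (l : ℝ≥0) (hl : l ≠ 0) :
    (gaussianReal 0 1).withDensity (fun x => ENNReal.ofReal (gdens l x)) = gaussianReal 0 l := by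
  rw [gaussianReal_of_var_ne_zero 0 hl, gaussianReal_of_var_ne_zero 0 one_ne_zero,
    ← withDensity_mul _ (measurable_gaussianPDF 0 1) (gdens_meas l).ennreal_ofReal]
  congr 1
  ext x
  have h1 := gaussianPDFReal_pos 0 1 x one_ne_zero
  simp only [Pi.mul_apply, gaussianPDF, gdens]
  rw [← ENNReal.ofReal_mul h1.le]
  congr 1
  field_simp

lemma gdens_sq (l : ℝ≥0) (hl : l ≠ 0) (x : ℝ) :
    gaussianPDFReal 0 1 x * (gdens l x) ^ 2
      = ((l : ℝ)⁻¹ * (√(2 * Real.pi))⁻¹) * Real.exp (-((l : ℝ)⁻¹ - 2⁻¹) * x ^ 2) := by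
  have hl' : (0:ℝ) < l := by positivity
  simp only [gdens, gaussianPDFReal, NNReal.coe_one]
  have h1 : Real.exp (-((l : ℝ)⁻¹ - 2⁻¹) * x ^ 2)
    = Real.exp (-(x-0)^2 / (2 * l)) ^ 2 / Real.exp (-(x-0)^2 / (2 * 1)) := by
    rw [← Real.exp_nat_mul, ← Real.exp_sub]
    congr 1
    field_simp
    push_cast
    ring
  have h2 : √(2 * Real.pi * l) ^ 2 = √(2 * Real.pi) ^ 2 * l := by
    rw [Real.sq_sqrt (by positivity), Real.sq_sqrt (by positivity)]
  rw [h1]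
  have h3 : 0 < √(2 * Real.pi * l) := by positivity
  have h4 : 0 < √(2 * Real.pi) := by positivity
  have h5 := Real.exp_pos (-(x-0)^2 / (2 * 1))
  rw [mul_one]
  field_simp
  rw [h2]

lemma gdens_integrable_sq (l : ℝ≥0) (hl : l ≠ 0) (h2 : l < 2) :
    Integrable (fun x => (gdens l x) ^ 2) (gaussianReal 0 1) := by
  have hl' : (0:ℝ) < l := by positivity
  have h2' : (l:ℝ) < 2 := by exact_mod_cast h2
  have hb : 0 < (l : ℝ)⁻¹ - 2⁻¹ := sub_pos.2 (inv_strictAnti₀ hl' h2')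
  rw [gaussianReal_of_var_ne_zero 0 one_ne_zero, integrable_withDensity_iff_integrable_smul'
    (measurable_gaussianPDF 0 1) (by simp [gaussianPDF])]
  simp only [toReal_gaussianPDF, smul_eq_mul, gdens_sq l hl]
  exact (integrable_exp_neg_mul_sq hb).const_mul _

lemma gdens_integral_sq (l : ℝ≥0) (hl : l ≠ 0) (h2 : l < 2) :
    ∫ x, (gdens l x) ^ 2 ∂(gaussianReal 0 1) = (√((l:ℝ) * (2 - l)))⁻¹ := by
  have hl' : (0:ℝ) < l := by positivity
  have h2' : (l:ℝ) < 2 := by exact_mod_cast h2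
  have hb : 0 < (l : ℝ)⁻¹ - 2⁻¹ := sub_pos.2 (inv_strictAnti₀ hl' h2')
  have h3 : 0 < 2 - (l:ℝ) := by linarith
  rw [integral_gaussianReal_eq_integral_smul one_ne_zero]
  simp only [smul_eq_mul, gdens_sq l hl]
  rw [integral_const_mul, integral_gaussian]
  have this : (l:ℝ)⁻¹ = (√((l:ℝ)^2))⁻¹ := by rw [Real.sqrt_sq hl'.le]
  have this2 : (l:ℝ)⁻¹ - 2⁻¹ = (2 - l) / (2 * l) := by field_simp
  rw [this2, this, ← Real.sqrt_inv, ← Real.sqrt_inv, ← Real.sqrt_inv, ← Real.sqrt_mul (by positivity), ← Real.sqrt_mul (by positivity)]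
  congr 1
  field_simp

lemma gdens_integral_sq_le (l : ℝ≥0) (e : ℝ) (he : e ≤ 1/2) (h : |(l:ℝ) - 1| ≤ e) :
    ∫ x, (gdens l x) ^ 2 ∂(gaussianReal 0 1) ≤ Real.exp (e ^ 2) := by
  obtain ⟨h1, h2⟩ := abs_le.1 h
  have hl : l ≠ 0 := by rintro rfl; norm_num at h1; linarith
  have hl2 : l < 2 := by
    have : (l:ℝ) < 2 := by linarith
    exact_mod_cast this
  rw [gdens_integral_sq l hl hl2]
  rw [inv_le_comm₀ (Real.sqrt_pos.2 (by nlinarith)) (Real.exp_pos _), ← Real.exp_neg]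
  apply Real.le_sqrt_of_sq_le
  rw [← Real.exp_nat_mul]
  have key : Real.exp (((2:ℕ):ℝ) * -e^2) ≤ 1 - e^2 := by
    have he0 : 0 ≤ e := le_trans (abs_nonneg _) h
    have h5 := Real.add_one_le_exp (2 * e^2)
    have : Real.exp (((2:ℕ):ℝ) * -e^2) = (Real.exp (2 * e^2))⁻¹ := by
      rw [← Real.exp_neg]; congr 1; push_cast; ring
    rw [this, inv_le_comm₀ (Real.exp_pos _) (by nlinarith)]
    refine le_trans ?_ h5
    rw [inv_le_iff_one_le_mul₀ (by nlinarith)]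
    have : e^2 ≤ 1/4 := by nlinarith
    nlinarith [sq_nonneg e]
  nlinarith


lemma pi_gdens {ι : Type*} [Fintype ι] (l : ι → ℝ≥0) (hl : ∀ i, l i ≠ 0)
    (h2 : ∀ i, l i < 2) :
    Measure.pi (fun i => gaussianReal 0 (l i)) =
      (Measure.pi (fun _ : ι => gaussianReal 0 1)).withDensity
        (fun x => ENNReal.ofReal (∏ i, gdens (l i) (x i))) := by
  apply Measure.pi_eq
  intro s hs
  have hi : ∀ i, Integrable (gdens (l i)) (gaussianReal 0 1) := by
    intro i
    have : MemLp (gdens (l i)) 2 (gaussianReal 0 1) :=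
      (memLp_two_iff_integrable_sq (gdens_meas _).aestronglyMeasurable).2
        (gdens_integrable_sq _ (hl i) (h2 i))
    exact this.integrable (by norm_num)
  rw [withDensity_apply _ (MeasurableSet.univ_pi hs), ← lintegral_indicator (MeasurableSet.univ_pi hs)]
  have e : (Set.univ.pi s).indicator (fun x : ι → ℝ => ENNReal.ofReal (∏ i, gdens (l i) (x i)))
      = fun x => ENNReal.ofReal (∏ i, (s i).indicator (gdens (l i)) (x i)) := by
    ext x
    by_cases hx : x ∈ Set.univ.pi s
    · rw [Set.indicator_of_mem hx]
      congr 1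
      refine Finset.prod_congr rfl fun i _ => ?_
      rw [Set.indicator_of_mem (hx i trivial)]
    · rw [Set.indicator_of_notMem hx]
      simp only [Set.mem_univ_pi, not_forall] at hx
      obtain ⟨i, hi⟩ := hx
      rw [Finset.prod_eq_zero (Finset.mem_univ i) (Set.indicator_of_notMem hi _)]
      simp
  have hnn : ∀ i x, 0 ≤ (s i).indicator (gdens (l i)) x := fun i x =>
    Set.indicator_nonneg (fun _ _ => gdens_nonneg _ _) _
  rw [e, ← ofReal_integral_eq_lintegral_ofReal
    (Integrable.fintype_prod (fun i => (hi i).indicator (hs i)))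
    (Eventually.of_forall fun x => Finset.prod_nonneg fun i _ => hnn i _),
    integral_fintype_prod_eq_prod, ENNReal.ofReal_prod_of_nonneg
      (fun i _ => integral_nonneg (hnn i))]
  refine Finset.prod_congr rfl fun i _ => ?_
  rw [ofReal_integral_eq_lintegral_ofReal ((hi i).indicator (hs i)) (Eventually.of_forall (hnn i)),
    ← gdens_withDensity (l i) (hl i), withDensity_apply _ (hs i), ← lintegral_indicator (hs i)]
  congr 1
  ext x
  by_cases hx : x ∈ s i <;> simp [hx]

lemma pi_gauss_tv {ι : Type*} [Fintype ι] (l : ι → ℝ≥0) (e : ℝ) (he0 : 0 < e)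
    (hd : 0 < Fintype.card ι)
    (hde : (Fintype.card ι : ℝ) * e ^ 2 ≤ 1 / 4) (h : ∀ i, |(l i:ℝ) - 1| ≤ e)
    (A : Set (ι → ℝ)) (hA : MeasurableSet A) :
    |(Measure.pi (fun i => gaussianReal 0 (l i)) A).toReal
      - (Measure.pi (fun _ : ι => gaussianReal 0 1) A).toReal|
      ≤ Real.sqrt (2 * Fintype.card ι) * e := by
  have hd1 : (1:ℝ) ≤ Fintype.card ι := by exact_mod_cast hd
  have he : e ≤ 1 / 2 := by nlinarith
  have hl : ∀ i, l i ≠ 0 := by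
    intro i hi
    have := (abs_le.1 (h i)).1
    rw [hi] at this; norm_num at this; linarith
  have hl2 : ∀ i, l i < 2 := by
    intro i
    have : (l i:ℝ) < 2 := by linarith [(abs_le.1 (h i)).2]
    exact_mod_cast this
  set P := Measure.pi (fun _ : ι => gaussianReal 0 1) with hP
  set g : (ι → ℝ) → ℝ := fun x => ∏ i, gdens (l i) (x i) with hg
  have hgm : Measurable g := Finset.measurable_prod _ fun i _ => (gdens_meas _).comp (measurable_pi_apply i)
  have hg0 : ∀ x, 0 ≤ g x := fun x => Finset.prod_nonneg fun i _ => gdens_nonneg _ _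
  have hg2 : Integrable (fun x => g x ^ 2) P := by
    simp only [hg, ← Finset.prod_pow]
    exact Integrable.fintype_prod (f := fun i x => gdens (l i) x ^ 2) (fun i => gdens_integrable_sq _ (hl i) (hl2 i))
  have hgi : Integrable g P := 
    ((memLp_two_iff_integrable_sq hgm.aestronglyMeasurable).2 hg2).integrable (by norm_num)
  have hI2 : ∫ x, g x ^ 2 ∂P ≤ 1 + 2 * (Fintype.card ι * e ^ 2) := by
    simp only [hg, ← Finset.prod_pow]
    rw [hP, integral_fintype_prod_eq_prod (f := fun i x => gdens (l i) x ^ 2)]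
    calc _ ≤ ∏ i : ι, Real.exp (e ^ 2) := Finset.prod_le_prod
            (fun i _ => integral_nonneg fun x => sq_nonneg _)
            (fun i _ => gdens_integral_sq_le _ e he (h i))
      _ = Real.exp (Fintype.card ι * e ^ 2) := by
            rw [Finset.prod_const, ← Real.exp_nat_mul]; rfl
      _ ≤ _ := by
            have h0 : 0 ≤ Fintype.card ι * e ^ 2 := by positivity
            have := Real.exp_bound' h0 (by linarith) (n := 1) (by norm_num)
            norm_num at this
            linarith
  have hpi := pi_gdens l hl hl2
  have hI1 : ∫ x, g x ∂P = 1 := by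
    have h1 : (P.withDensity (fun x => ENNReal.ofReal (g x))) Set.univ = 1 := by
      rw [← hpi]; exact measure_univ
    rw [withDensity_apply _ MeasurableSet.univ, Measure.restrict_univ,
      ← ofReal_integral_eq_lintegral_ofReal hgi (Eventually.of_forall hg0)] at h1
    simpa using h1
  have hA1 : (Measure.pi (fun i => gaussianReal 0 (l i)) A).toReal = ∫ x in A, g x ∂P := by
    rw [hpi, withDensity_apply _ hA, ← ofReal_integral_eq_lintegral_ofReal hgi.integrableOn
      (Eventually.of_forall hg0), ENNReal.toReal_ofReal (integral_nonneg hg0)]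
  have hA2 : (P A).toReal = ∫ x in A, (1:ℝ) ∂P := by simp [Measure.real]
  have hint1 : Integrable (fun x => g x - 1) P := hgi.sub (integrable_const 1)
  have hintsq : Integrable (fun x => (g x - 1) ^ 2) P := by
    have : (fun x => (g x - 1) ^ 2) = fun x => (g x ^ 2 - 2 * g x) + 1 := by ext; ring
    rw [this]
    exact (hg2.sub (hgi.const_mul 2)).add (integrable_const 1)
  have hsq : ∫ x, (g x - 1) ^ 2 ∂P ≤ 2 * (Fintype.card ι * e ^ 2) := by
    have : (fun x => (g x - 1) ^ 2) = fun x => (g x ^ 2 - 2 * g x) + 1 := by ext; ring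
    have hh : Integrable (fun x => g x ^ 2 - 2 * g x) P := hg2.sub (hgi.const_mul 2)
    rw [this, integral_add hh (integrable_const 1),
      integral_sub hg2 (hgi.const_mul 2), integral_const_mul, hI1]
    simp
    linarith
  set K := Real.sqrt (2 * Fintype.card ι) * e with hK
  have hK0 : 0 < K := by positivity
  have hKsq : K ^ 2 = 2 * (Fintype.card ι * e ^ 2) := by
    rw [hK, mul_pow, Real.sq_sqrt (by positivity)]; ring
  rw [hA1, hA2, ← integral_sub hgi.integrableOn (integrable_const 1)]
  calc |∫ x in A, (g x - 1) ∂P| ≤ ∫ x in A, |g x - 1| ∂P := abs_integral_le_integral_abs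
    _ ≤ ∫ x, |g x - 1| ∂P := setIntegral_le_integral hint1.abs (Eventually.of_forall fun x => abs_nonneg _)
    _ ≤ ∫ x, (K / 2 + (g x - 1) ^ 2 * (2 * K)⁻¹) ∂P := by
        apply integral_mono hint1.abs ((integrable_const _).add (hintsq.mul_const _))
        intro x
        have : 0 ≤ (|g x - 1| - K) ^ 2 * (2 * K)⁻¹ := by positivity
        have h2 : (|g x - 1| - K) ^ 2 * (2 * K)⁻¹ = K / 2 + (g x - 1) ^ 2 * (2 * K)⁻¹ - |g x - 1| := by
          rw [← sq_abs (g x - 1)]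
          field_simp
          ring
        show |g x - 1| ≤ K / 2 + (g x - 1) ^ 2 * (2 * K)⁻¹
        linarith
    _ = K / 2 + (∫ x, (g x - 1) ^ 2 ∂P) * (2 * K)⁻¹ := by
        rw [integral_add (integrable_const _) (hintsq.mul_const _), integral_mul_const]
        simp
    _ ≤ K / 2 + K ^ 2 * (2 * K)⁻¹ := by
        gcongr
        rw [hKsq]; exact hsq
    _ = K := by field_simp; norm_num
lemma charFunDual_gauss (l : ℝ≥0) (L : StrongDual ℝ ℝ) :
    charFunDual (gaussianReal 0 l) L = Complex.exp (((-((l:ℝ) * (L 1) ^ 2 / 2) : ℝ)) : ℂ) := by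
  rw [charFunDual_eq_charFun_map_one, gaussianReal_map_continuousLinearMap, charFun_gaussianReal]
  congr 1
  simp only [Complex.ofReal_one, one_mul, map_zero, Complex.ofReal_zero, zero_mul, one_pow, mul_one, zero_sub,
    NNReal.coe_mul, Real.coe_toNNReal _ (sq_nonneg (L 1))]
  push_cast
  ring

lemma map_mulVec_gauss {ι M : Type*} [Fintype ι] [Fintype M] [DecidableEq ι] (Z : Matrix ι M ℝ)
    (l : ι → ℝ≥0) (hZ : Z * Z.transpose = Matrix.diagonal (fun i => (l i : ℝ))) :
    (Measure.pi (fun _ : M => gaussianReal 0 1)).map (fun w => Z.mulVec w)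
      = Measure.pi (fun i => gaussianReal 0 (l i)) := by
  classical
  let T : (M → ℝ) →L[ℝ] (ι → ℝ) := LinearMap.toContinuousLinearMap (Matrix.mulVecLin Z)
  have hT : (fun w => Z.mulVec w) = T := by ext; simp [T]
  have : IsProbabilityMeasure ((Measure.pi (fun _ : M => gaussianReal 0 1)).map T) :=
    Measure.isProbabilityMeasure_map T.continuous.measurable.aemeasurable
  rw [hT]
  apply Measure.ext_of_charFunDual
  ext L
  rw [charFunDual_map, charFunDual_pi, charFunDual_pi]
  simp only [charFunDual_gauss]
  rw [← Complex.exp_sum, ← Complex.exp_sum, ← Complex.ofReal_sum, ← Complex.ofReal_sum]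
  congr 2
  simp only [Finset.sum_neg_distrib, ← Finset.sum_div]
  congr 2
  set t : ι → ℝ := fun i => L (Pi.single i 1) with ht
  have hL : ∀ x : ι → ℝ, L x = ∑ i, t i * x i := by
    intro x
    conv_lhs => rw [pi_eq_sum_univ' x, map_sum]
    refine Finset.sum_congr rfl fun i _ => ?_
    rw [map_smul, smul_eq_mul, mul_comm, ht]
  have h1 : ∀ m, (((L.comp T).comp (ContinuousLinearMap.single ℝ (fun _ : M => ℝ) m)) 1)
      = ∑ i, t i * Z i m := by
    intro m
    show L (T (Pi.single m 1)) = _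
    rw [hL]
    simp [T]
  have h2 : ∀ i, ((L.comp (ContinuousLinearMap.single ℝ (fun _ : ι => ℝ) i)) 1) = t i := by
    intro i; rfl
  simp only [h1, h2]
  have h3 : ∀ i j, ∑ m, Z i m * Z j m = if i = j then (l i : ℝ) else 0 := by
    intro i j
    have := congrFun (congrFun hZ i) j
    simpa [Matrix.mul_apply, Matrix.diagonal_apply] using this
  calc ∑ m, ((1:ℝ≥0):ℝ) * (∑ i, t i * Z i m) ^ 2
      = ∑ m, ∑ i, ∑ j, t i * t j * (Z i m * Z j m) := by
        refine Finset.sum_congr rfl fun m _ => ?_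
        rw [NNReal.coe_one, one_mul, sq, Finset.sum_mul_sum]
        refine Finset.sum_congr rfl fun i _ => Finset.sum_congr rfl fun j _ => by ring
    _ = ∑ i, ∑ j, t i * t j * ∑ m, (Z i m * Z j m) := by
        rw [Finset.sum_comm]
        refine Finset.sum_congr rfl fun i _ => ?_
        rw [Finset.sum_comm]
        refine Finset.sum_congr rfl fun j _ => ?_
        rw [Finset.mul_sum]
    _ = _ := by
        simp only [h3]
        refine Finset.sum_congr rfl fun i _ => ?_
        simp
        ring

open Matrix in
lemma exists_simul_diag {ι : Type*} [Fintype ι] [DecidableEq ι] (S1 S2 : Matrix ι ι ℝ)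
    (h1 : S1.PosDef) (h2 : S2.IsHermitian) :
    ∃ (c : Matrix ι ι ℝ) (l : ι → ℝ), IsUnit c ∧ c * S1 * cᵀ = 1 ∧ c * S2 * cᵀ = diagonal l := by
  obtain ⟨Q, hQu, hQ⟩ : ∃ Q : Matrix ι ι ℝ, IsUnit Q ∧ Q * S1 * Qᵀ = 1 := by
    have hs := h1.isHermitian.conjStarAlgAut_star_eigenvectorUnitary
    have hp := h1.eigenvalues_pos
    set U := h1.isHermitian.eigenvectorUnitary
    set d := h1.isHermitian.eigenvalues
    have hUU : (star U : Matrix ι ι ℝ) * (U : Matrix ι ι ℝ) = 1 := Unitary.coe_star_mul_self U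
    have hs' : (star U : Matrix ι ι ℝ) * S1 * (U : Matrix ι ι ℝ) = diagonal d := by
      rw [Unitary.conjStarAlgAut_apply] at hs
      simpa using hs
    have hD : IsUnit (diagonal (fun i => (√(d i))⁻¹) : Matrix ι ι ℝ) := by
      rw [Matrix.isUnit_diagonal, Pi.isUnit_iff]
      intro i
      exact (inv_ne_zero (Real.sqrt_pos.2 (hp i)).ne').isUnit
    refine ⟨diagonal (fun i => (√(d i))⁻¹) * (star U : Matrix ι ι ℝ), ?_, ?_⟩
    · exact hD.mul (IsUnit.of_mul_eq_one _ hUU)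
    · have ht : ((star U : Matrix ι ι ℝ))ᵀ = (U : Matrix ι ι ℝ) := by
        rw [Matrix.star_eq_conjTranspose, ← Matrix.conjTranspose_eq_transpose_of_trivial, Matrix.conjTranspose_conjTranspose]
      rw [Matrix.transpose_mul, ht, Matrix.diagonal_transpose]
      calc _ = diagonal (fun i => (√(d i))⁻¹) * ((star U : Matrix ι ι ℝ) * S1 * (U : Matrix ι ι ℝ)) * diagonal (fun i => (√(d i))⁻¹) := by
            simp only [Matrix.mul_assoc]
        _ = 1 := by
            rw [hs', diagonal_mul_diagonal, diagonal_mul_diagonal, ← diagonal_one]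
            congr 1
            ext i
            have := Real.mul_self_sqrt (hp i).le
            have h0 := (Real.sqrt_pos.2 (hp i)).ne'
            field_simp
            nlinarith
  have hM : (Q * S2 * Qᵀ).IsHermitian := by
    have := Matrix.isHermitian_mul_mul_conjTranspose Q h2
    rwa [Matrix.conjTranspose_eq_transpose_of_trivial] at this
  have hs := hM.conjStarAlgAut_star_eigenvectorUnitary
  set U := hM.eigenvectorUnitary
  set d := hM.eigenvalues
  have hUU : (star U : Matrix ι ι ℝ) * (U : Matrix ι ι ℝ) = 1 := Unitary.coe_star_mul_self U
  have hs' : (star U : Matrix ι ι ℝ) * (Q * S2 * Qᵀ) * (U : Matrix ι ι ℝ) = diagonal d := by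
    rw [Unitary.conjStarAlgAut_apply] at hs
    simpa using hs
  have ht : ((star U : Matrix ι ι ℝ))ᵀ = (U : Matrix ι ι ℝ) := by
    rw [Matrix.star_eq_conjTranspose, ← Matrix.conjTranspose_eq_transpose_of_trivial, Matrix.conjTranspose_conjTranspose]
  refine ⟨(star U : Matrix ι ι ℝ) * Q, d, (IsUnit.of_mul_eq_one _ hUU).mul hQu, ?_, ?_⟩
  · rw [Matrix.transpose_mul, ht]
    calc _ = (star U : Matrix ι ι ℝ) * (Q * S1 * Qᵀ) * (U : Matrix ι ι ℝ) := by
          simp only [Matrix.mul_assoc]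
      _ = 1 := by rw [hQ, Matrix.mul_one, hUU]
  · rw [Matrix.transpose_mul, ht, ← hs']
    simp only [Matrix.mul_assoc]

lemma measurable_mulVec_aux {ι M : Type*} [Fintype ι] [Fintype M] (X : Matrix ι M ℝ) :
    Measurable (fun w : M → ℝ => X.mulVec w) :=
  (Continuous.matrix_mulVec continuous_const continuous_id).measurable

open Matrix in
lemma gauss_tv {ι M : Type*} [Fintype ι] [Fintype M] (X Y : Matrix ι M ℝ)
    (e : ℝ) (he0 : 0 < e)
    (hd : 0 < Fintype.card ι)
    (hde : (Fintype.card ι : ℝ) * e ^ 2 ≤ 1 / 4)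
    (hpos : ∀ c : ι → ℝ, c ≠ 0 → 0 < ∑ m, (c ᵥ* Y) m ^ 2)
    (hXY : ∀ c : ι → ℝ, |∑ m, (c ᵥ* X) m ^ 2 - ∑ m, (c ᵥ* Y) m ^ 2| ≤ e * ∑ m, (c ᵥ* Y) m ^ 2)
    (A : Set (ι → ℝ)) (hA : MeasurableSet A) :
    |((Measure.pi (fun _ : M => gaussianReal 0 1)).map (fun w => X.mulVec w) A).toReal
      - ((Measure.pi (fun _ : M => gaussianReal 0 1)).map (fun w => Y.mulVec w) A).toReal|
      ≤ Real.sqrt (2 * Fintype.card ι) * e := by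
  classical
  have hH : ∀ X : Matrix ι M ℝ, (X * Xᵀ).IsHermitian := by
    intro X
    have := Matrix.isHermitian_mul_conjTranspose_self X
    rwa [Matrix.conjTranspose_eq_transpose_of_trivial] at this
  have hS1 : (Y * Yᵀ).PosDef := by
    refine Matrix.PosDef.of_dotProduct_mulVec_pos (hH Y) fun c hc => ?_
    have := hpos c hc
    have e1 : star c ⬝ᵥ (Y * Yᵀ) *ᵥ c = ∑ m, (c ᵥ* Y) m ^ 2 := by
      rw [star_trivial, ← Matrix.mulVec_mulVec, Matrix.mulVec_transpose, Matrix.dotProduct_mulVec]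
      simp [dotProduct, sq]
    rw [e1]; exact this
  obtain ⟨c, l, hc, h1, h2⟩ := exists_simul_diag (Y * Yᵀ) (X * Xᵀ) hS1 (hH X)
  have hdiag : ∀ (X : Matrix ι M ℝ) i, (c * (X * Xᵀ) * cᵀ) i i = ∑ m, (c i ᵥ* X) m ^ 2 := by
    intro X i
    have : c * (X * Xᵀ) * cᵀ = (c * X) * (c * X)ᵀ := by
      rw [Matrix.transpose_mul]; simp only [Matrix.mul_assoc]
    rw [this, Matrix.mul_apply]
    refine Finset.sum_congr rfl fun m _ => ?_
    rw [Matrix.transpose_apply, Matrix.mul_apply_eq_vecMul, sq]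
  have hl : ∀ i, l i = ∑ m, (c i ᵥ* X) m ^ 2 := by
    intro i; rw [← hdiag, h2]; simp
  have hone : ∀ i, ∑ m, (c i ᵥ* Y) m ^ 2 = 1 := by
    intro i; rw [← hdiag, h1]; simp
  have hl0 : ∀ i, 0 ≤ l i := fun i => by
    rw [hl]; positivity
  have hle : ∀ i, |l i - 1| ≤ e := by
    intro i
    have := hXY (c i)
    rwa [hone, ← hl, mul_one] at this
  have hW : (c * X) * (c * X)ᵀ = diagonal (fun i => (((l i).toNNReal : ℝ≥0) : ℝ)) := by
    simp only [Real.coe_toNNReal _ (hl0 _)]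
    rw [← h2, Matrix.transpose_mul]; simp only [Matrix.mul_assoc]
  have hZ : (c * Y) * (c * Y)ᵀ = diagonal (fun i : ι => (((1 : ℝ≥0)) : ℝ)) := by
    simp only [NNReal.coe_one]
    rw [diagonal_one, ← h1, Matrix.transpose_mul]; simp only [Matrix.mul_assoc]
  have key : ∀ X : Matrix ι M ℝ, (Measure.pi (fun _ : M => gaussianReal 0 1)).map (fun w => X.mulVec w) A
      = (Measure.pi (fun _ : M => gaussianReal 0 1)).map (fun w => (c * X).mulVec w) ((fun y => c⁻¹ *ᵥ y) ⁻¹' A) := by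
    intro X
    rw [Measure.map_apply (measurable_mulVec_aux _) hA,
      Measure.map_apply (measurable_mulVec_aux _)
        ((measurable_mulVec_aux _) hA), ← Set.preimage_comp]
    congr 2
    ext1 w
    simp only [Function.comp, id]
    rw [Matrix.mulVec_mulVec, ← Matrix.mul_assoc, Matrix.nonsing_inv_mul _ ((Matrix.isUnit_iff_isUnit_det _).1 hc), Matrix.one_mul]
  rw [key X, key Y, map_mulVec_gauss (c * X) _ hW, map_mulVec_gauss (c * Y) _ hZ]
  refine pi_gauss_tv _ e he0 hd hde (fun i => ?_) _
    ((measurable_mulVec_aux _) hA)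
  rw [Real.coe_toNNReal _ (hl0 i)]
  exact hle i

abbrev UpIdx (n : ℕ) := {p : Fin n × Fin n // p.1 ≤ p.2}

/-- matrix of the mixed contraction as a linear map of the Gaussian coordinates -/
noncomputable def XX {n : ℕ} (u v : Fin n → ℝ) : Matrix (UpIdx n) (Sym (Fin n) 4) ℝ :=
  fun p m => ∑ a, ∑ b, if tupleSym ![p.1.1, p.1.2, a, b] = m then
    √(4 / (permCount ![p.1.1, p.1.2, a, b] : ℝ)) * (u a * v b) else 0

lemma mixedUpperLaw_eq (n : ℕ) (u v : Fin n → ℝ) :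
    mixedUpperLaw n u v
      = (Measure.pi (fun _ : Sym (Fin n) 4 => gaussianReal 0 1)).map (fun w => (XX u v).mulVec w) := by
  unfold mixedUpperLaw goteMeasure
  congr 1
  ext w p
  simp only [mixedContraction, gote, Matrix.mulVec, dotProduct, XX, Finset.sum_mul]
  symm
  rw [Finset.sum_comm]
  refine Finset.sum_congr rfl fun a _ => ?_
  rw [Finset.sum_comm]
  refine Finset.sum_congr rfl fun b _ => ?_
  simp only [ite_mul, zero_mul]
  rw [Finset.sum_ite_eq]
  simp
  ring

def upC {n : ℕ} (c : UpIdx n → ℝ) (i j : Fin n) : ℝ := if h : i ≤ j then c ⟨(i, j), h⟩ else 0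

lemma upC_nonneg {n : ℕ} (c : UpIdx n → ℝ) (i j : Fin n) : 0 ≤ upC c i j * upC c j i := by
  by_cases h : i ≤ j
  · by_cases h' : j ≤ i
    · obtain rfl := le_antisymm h h'
      exact mul_self_nonneg _
    · simp [upC, h']
  · simp [upC, h]

lemma sum_upIdx {n : ℕ} (f : Fin n → Fin n → ℝ → ℝ) (hf : ∀ i j, f i j 0 = 0) (c : UpIdx n → ℝ) :
    ∑ p : UpIdx n, f p.1.1 p.1.2 (c p) = ∑ i, ∑ j, f i j (upC c i j) := by
  rw [← Fintype.sum_prod_type' (f := fun i j => f i j (upC c i j))]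
  rw [← Finset.sum_subset (Finset.subset_univ (Finset.univ.filter (fun p : Fin n × Fin n => p.1 ≤ p.2)))]
  · rw [Finset.sum_subtype (p := fun p : Fin n × Fin n => p.1 ≤ p.2) _ (by simp)]
    refine Finset.sum_congr rfl fun p _ => ?_
    have : upC c p.1.1 p.1.2 = c p := by simp [upC, p.2]
    rw [this]
  · intro x _ hx
    have : ¬ x.1 ≤ x.2 := by simpa using hx
    simp [upC, this, hf]

lemma vecMul_XX {n : ℕ} (u v : Fin n → ℝ) (c : UpIdx n → ℝ) :
    Matrix.vecMul c (XX u v) = LL (upC c) u v := by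
  ext m
  simp only [Matrix.vecMul, dotProduct, XX, LL, fibL]
  rw [sum_upIdx (fun i j x => x * ∑ a, ∑ b, if tupleSym ![i, j, a, b] = m then
    √(4 / (permCount ![i, j, a, b] : ℝ)) * (u a * v b) else 0) (by simp)]
  simp only [Fintype.sum_prod_type, Finset.mul_sum]
  refine Finset.sum_congr rfl fun i _ => Finset.sum_congr rfl fun j _ =>
    Finset.sum_congr rfl fun a _ => Finset.sum_congr rfl fun b _ => ?_
  have := permCount_tp (i, j, a, b)
  rw [← this]
  change _ = if tupleSym ![i, j, a, b] = m then √(4 / (permCount ![i, j, a, b] : ℝ)) * (upC c i j * u a * v b) else 0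
  split_ifs
  · ring
  · ring

lemma tv_main {n : ℕ} (hn : 1 ≤ n) (u v : Fin n → ℝ) (hu : ∑ i, u i ^ 2 = 1) (hv : ∑ i, v i ^ 2 = 1)
    (A : Set (UpIdx n → ℝ)) (hA : MeasurableSet A) :
    |((mixedUpperLaw n u v) A).toReal - ((mixedUpperLaw n u u) A).toReal|
      ≤ 576 * n * Real.sqrt (∑ i, (u i - v i) ^ 2) := by
  have hn' : (1:ℝ) ≤ n := by exact_mod_cast hn
  set δ := Real.sqrt (∑ i, (u i - v i) ^ 2) with hδ
  have hδ0 : 0 ≤ δ := Real.sqrt_nonneg _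
  rcases hδ0.eq_or_lt with h0 | h0
  · have huv : u = v := by
      have h1 : ∑ i, (u i - v i) ^ 2 = 0 :=
        (Real.sqrt_eq_zero (by positivity)).1 (hδ ▸ h0.symm)
      ext i
      have := (Finset.sum_eq_zero_iff_of_nonneg (fun i _ => sq_nonneg (u i - v i))).1 h1 i (Finset.mem_univ _)
      exact sub_eq_zero.1 (pow_eq_zero_iff (two_ne_zero) |>.1 this)
    subst huv
    simp
    positivity
  rw [mixedUpperLaw_eq, mixedUpperLaw_eq]
  by_cases hbig : (n:ℝ) * (288 * δ) ≤ 1 / 2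
  · have hcard : Fintype.card (UpIdx n) ≤ n ^ 2 := by
      refine (Fintype.card_subtype_le _).trans ?_
      simp [sq]
    have hcard' : (Fintype.card (UpIdx n) : ℝ) ≤ (n:ℝ) ^ 2 := by exact_mod_cast hcard
    have hpos : 0 < Fintype.card (UpIdx n) :=
      Fintype.card_pos_iff.2 ⟨⟨(⟨0, hn⟩, ⟨0, hn⟩), le_rfl⟩⟩
    refine (gauss_tv (XX u v) (XX u u) (288 * δ) (by positivity) hpos ?_ ?_ ?_ A hA).trans ?_
    · calc _ ≤ (n:ℝ) ^ 2 * (288 * δ) ^ 2 := by gcongr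
        _ = ((n:ℝ) * (288 * δ)) ^ 2 := by ring
        _ ≤ (1 / 2) ^ 2 := by gcongr
        _ = 1 / 4 := by norm_num
    · intro c hc
      simp only [vecMul_XX]
      have h1 := LL_lower (upC c) u hu (upC_nonneg c)
      obtain ⟨p, hp⟩ := Function.ne_iff.1 hc
      have h2 : 0 < upC c p.1.1 p.1.2 ^ 2 := by
        have : upC c p.1.1 p.1.2 = c p := by simp [upC, p.2]
        rw [this]
        exact (sq_pos_iff).2 hp
      have h3 : upC c p.1.1 p.1.2 ^ 2 ≤ ∑ i, ∑ j, upC c i j ^ 2 :=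
        (Finset.single_le_sum (f := fun j => upC c p.1.1 j ^ 2) (fun j _ => sq_nonneg _) (Finset.mem_univ p.1.2)).trans
          (Finset.single_le_sum (f := fun i => ∑ j, upC c i j ^ 2) (fun i _ => by positivity) (Finset.mem_univ p.1.1))
      linarith
    · intro c
      simp only [vecMul_XX]
      have h1 := LL_lower (upC c) u hu (upC_nonneg c)
      have h2 := LL_diff (upC c) u v hu hv
      refine h2.trans ?_
      rw [← hδ]
      nlinarith
    · have : √(2 * (Fintype.card (UpIdx n) : ℝ)) ≤ 2 * n := by
        apply Real.sqrt_le_iff.2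
        constructor
        · positivity
        · nlinarith
      calc _ ≤ 2 * n * (288 * δ) := by gcongr
        _ = _ := by ring
  · have hp : ∀ X : Matrix (UpIdx n) (Sym (Fin n) 4) ℝ, IsProbabilityMeasure
        ((Measure.pi (fun _ : Sym (Fin n) 4 => gaussianReal 0 1)).map (fun w => X.mulVec w)) := fun X =>
      Measure.isProbabilityMeasure_map (measurable_mulVec_aux X).aemeasurable
    have h1 := hp (XX u v)
    have h2 := hp (XX u u)
    have hb : ∀ (μ : Measure (UpIdx n → ℝ)) [IsProbabilityMeasure μ], 0 ≤ (μ A).toReal ∧ (μ A).toReal ≤ 1 :=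
      fun μ _ => ⟨ENNReal.toReal_nonneg, measureReal_le_one⟩
    have b1 := hb ((Measure.pi (fun _ : Sym (Fin n) 4 => gaussianReal 0 1)).map (fun w => (XX u v).mulVec w))
    have b2 := hb ((Measure.pi (fun _ : Sym (Fin n) 4 => gaussianReal 0 1)).map (fun w => (XX u u).mulVec w))
    rw [abs_le]
    constructor <;> linarith [b1.1, b1.2, b2.1, b2.2]

/-- **Total variation bound between mixed-contraction laws.**
There is an absolute constant `C > 0` with
`d_TV(ℙ_{u,v}, ℙ_{u,u}) ≤ C·n·‖u − v‖₂` for all `n ≥ 1` and unit vectors `u, v ∈ ℝⁿ`. -/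
theorem tv_distance_mixed_contractions :
    ∃ C : ℝ, 0 < C ∧ ∀ n : ℕ, 1 ≤ n → ∀ u v : Fin n → ℝ,
      (∑ i, u i ^ 2 = 1) → (∑ i, v i ^ 2 = 1) →
      tvDist (mixedUpperLaw n u v) (mixedUpperLaw n u u)
        ≤ C * n * Real.sqrt (∑ i, (u i - v i) ^ 2) := by
  refine ⟨576, by norm_num, fun n hn u v hu hv => ?_⟩
  haveI : Nonempty {A : Set ({p : Fin n × Fin n // p.1 ≤ p.2} → ℝ) // MeasurableSet A} :=
    ⟨⟨∅, MeasurableSet.empty⟩⟩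
  exact ciSup_le fun A => tv_main hn u v hu hv A.1 A.2
end

section
/- There exist universal constants C₁, C₂ > 0 such that for every n ≥ 1, all unit vectors u, v ∈ ℝⁿ and every ε ∈ (0,1), if G is a GOTE(4,n) tensor then |E[λ₁(n^{−1/2} G·u⊗v)] − E[λ₁(n^{−1/2} G·u⊗u)]| ≤ C₁·ε + C₂·√(‖u − v‖₂ · log(1/ε)). -/
open MeasureTheory ProbabilityTheory Filter

/-- A `1/2`-net of the unit ball of cardinality at most `5 ^ n`. -/
theorem exists_half_net (n : ℕ) : ∃ N : Finset (EuclideanSpace ℝ (Fin n)),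
    N.card ≤ 5 ^ n ∧ (∀ x ∈ N, ‖x‖ ≤ 1) ∧ ∀ x, ‖x‖ ≤ 1 → ∃ y ∈ N, ‖x - y‖ ≤ 1 / 2 := by
  classical
  let P : Finset (EuclideanSpace ℝ (Fin n)) → Prop := fun N =>
    (∀ x ∈ N, ‖x‖ ≤ 1) ∧ ∀ x ∈ N, ∀ y ∈ N, x ≠ y → 1 / 2 ≤ ‖x - y‖
  have hcard : ∀ N, P N → N.card ≤ 5 ^ n := by
    rintro N ⟨h1, h2⟩
    have hinj : Function.Injective (fun x : EuclideanSpace ℝ (Fin n) => (2 : ℝ) • x) :=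
      smul_right_injective _ (by norm_num)
    have := Besicovitch.card_le_of_separated (N.image (fun x => (2 : ℝ) • x)) (by
      intro c hc
      obtain ⟨x, hx, rfl⟩ := Finset.mem_image.1 hc
      rw [norm_smul]
      have := h1 x hx
      norm_num
      linarith) (by
      intro c hc d hd hcd
      obtain ⟨x, hx, rfl⟩ := Finset.mem_image.1 hc
      obtain ⟨y, hy, rfl⟩ := Finset.mem_image.1 hd
      have := h2 x hx y hy (fun h => hcd (by rw [h]))
      rw [← smul_sub, norm_smul]
      norm_num
      linarith)
    rw [Finset.card_image_of_injective _ hinj] at this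
    simpa using this
  have hex : ∃ N, P N ∧ ∀ M, P M → M.card ≤ N.card := by
    let Q : ℕ → Prop := fun k => ∃ N, P N ∧ N.card = k
    have h0 : Q 0 := ⟨∅, by simp [P], by simp⟩
    obtain ⟨N, hN, hk⟩ := Nat.findGreatest_spec (P := Q) (Nat.zero_le (5 ^ n)) h0
    refine ⟨N, hN, fun M hM => ?_⟩
    rw [hk]
    exact Nat.le_findGreatest (hcard M hM) ⟨M, hM, rfl⟩
  obtain ⟨N, hN, hmax⟩ := hex
  refine ⟨N, hcard N hN, hN.1, fun x hx => ?_⟩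
  by_contra! hcon
  have hxN : x ∉ N := fun h => by
    have := hcon x h
    simp at this
    linarith
  have hP : P (insert x N) := by
    refine ⟨?_, ?_⟩
    · intro y hy
      rcases Finset.mem_insert.1 hy with rfl | hy
      · exact hx
      · exact hN.1 y hy
    · intro y hy z hz hyz
      rcases Finset.mem_insert.1 hy with hy1 | hy1 <;>
        rcases Finset.mem_insert.1 hz with hz1 | hz1
      · exact absurd (hy1.trans hz1.symm) hyz
      · rw [hy1]; exact (hcon z hz1).le
      · rw [hz1, norm_sub_rev]; exact (hcon y hy1).le
      · exact hN.2 y hy1 z hz1 hyz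
  have := hmax _ hP
  rw [Finset.card_insert_of_notMem hxN] at this
  omega

theorem opNorm_le_of_net {n : ℕ} (N : Finset (EuclideanSpace ℝ (Fin n)))
    (hN2 : ∀ x, ‖x‖ ≤ 1 → ∃ y ∈ N, ‖x - y‖ ≤ 1 / 2)
    (T : EuclideanSpace ℝ (Fin n) →L[ℝ] EuclideanSpace ℝ (Fin n)) (K : ℝ)
    (hK : ∀ x ∈ N, ∀ y ∈ N, inner ℝ x (T y) ≤ K) : ‖T‖ ≤ 4 * K := by
  have h1 : ∀ y ∈ N, ‖T y‖ ≤ 2 * K := by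
    intro y hy
    obtain ⟨x0, hx0, hd⟩ := hN2 (‖T y‖⁻¹ • T y) (by
      rw [norm_smul, norm_inv, norm_norm]
      exact inv_mul_le_one)
    have e1 : inner ℝ (‖T y‖⁻¹ • T y) (T y) = ‖T y‖ := by
      rw [real_inner_smul_left, real_inner_self_eq_norm_sq]
      by_cases h : ‖T y‖ = 0
      · simp [h]
      · field_simp
    have e2 : inner ℝ (‖T y‖⁻¹ • T y - x0) (T y) ≤ 1 / 2 * ‖T y‖ :=
      (real_inner_le_norm _ _).trans (by gcongr)
    rw [inner_sub_left, e1] at e2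
    have := hK x0 hx0 y hy
    linarith
  have hK0 : 0 ≤ K := by
    obtain ⟨y, hy, _⟩ := hN2 0 (by simp)
    have := h1 y hy
    have := norm_nonneg (T y)
    linarith
  have h2 : ‖T‖ ≤ 2 * K + 1 / 2 * ‖T‖ := by
    refine ContinuousLinearMap.opNorm_le_of_unit_norm (by positivity) fun x hx => ?_
    obtain ⟨y, hy, hd⟩ := hN2 x hx.le
    have : T x = T y + T (x - y) := by simp
    rw [this]
    refine (norm_add_le _ _).trans (add_le_add (h1 y hy) ?_)
    refine (T.le_opNorm _).trans ?_
    rw [mul_comm]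
    gcongr
  linarith

theorem inner_le_lambdaMax {n : ℕ} (B : Matrix (Fin n) (Fin n) ℝ) (hB : B.IsHermitian)
    (x : EuclideanSpace ℝ (Fin n)) :
    inner ℝ x (Matrix.toEuclideanCLM (𝕜 := ℝ) B x) ≤ lambdaMax B * ‖x‖ ^ 2 := by
  have hsa : IsSelfAdjoint (Matrix.toEuclideanCLM (𝕜 := ℝ) B) := by
    have : IsSelfAdjoint B := hB
    exact this.map _
  have hsym := hsa.isSymmetric
  let b := hB.eigenvectorBasis
  have hb : ∀ i, Matrix.toEuclideanCLM (𝕜 := ℝ) B (b i) = hB.eigenvalues i • b i := by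
    intro i
    apply WithLp.ofLp_injective
    rw [Matrix.ofLp_toEuclideanCLM]
    exact hB.mulVec_eigenvectorBasis i
  have hle : ∀ i, hB.eigenvalues i ≤ lambdaMax B := by
    intro i
    have : eigsOf B = hB.eigenvalues := by rw [eigsOf, dif_pos hB]
    rw [lambdaMax, this]
    exact le_ciSup (Set.finite_range _).bddAbove i
  rw [← real_inner_self_eq_norm_sq, ← b.sum_inner_mul_inner x, ← b.sum_inner_mul_inner x x,
    Finset.mul_sum]
  refine Finset.sum_le_sum fun i _ => ?_
  have : inner ℝ (b i) (Matrix.toEuclideanCLM (𝕜 := ℝ) B x)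
      = hB.eigenvalues i * inner ℝ (b i) x := by
    have := hsym (b i) x
    simp only [ContinuousLinearMap.coe_coe] at this
    rw [← this, hb, real_inner_smul_left]
  rw [this, real_inner_comm (b i) x]
  have h := mul_nonneg (sub_nonneg.2 (hle i)) (mul_self_nonneg (inner ℝ (b i) x))
  linarith

theorem lambdaMax_sub_le {n : ℕ} (hn : 1 ≤ n) (A B : Matrix (Fin n) (Fin n) ℝ)
    (hA : A.IsHermitian) (hB : B.IsHermitian) :
    lambdaMax A - lambdaMax B ≤ ‖Matrix.toEuclideanCLM (𝕜 := ℝ) (A - B)‖ := by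
  have : Nonempty (Fin n) := ⟨⟨0, hn⟩⟩
  have hAe : eigsOf A = hA.eigenvalues := by rw [eigsOf, dif_pos hA]
  suffices h : lambdaMax A ≤ lambdaMax B + ‖Matrix.toEuclideanCLM (𝕜 := ℝ) (A - B)‖ by linarith
  rw [lambdaMax, hAe]
  refine ciSup_le fun i => ?_
  let e := hA.eigenvectorBasis i
  have he : ‖e‖ = 1 := hA.eigenvectorBasis.orthonormal.1 i
  have h1 : Matrix.toEuclideanCLM (𝕜 := ℝ) A e = hA.eigenvalues i • e := by
    apply WithLp.ofLp_injective
    rw [Matrix.ofLp_toEuclideanCLM]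
    exact hA.mulVec_eigenvectorBasis i
  have h2 : inner ℝ e (Matrix.toEuclideanCLM (𝕜 := ℝ) A e) = hA.eigenvalues i := by
    rw [h1, real_inner_smul_right, real_inner_self_eq_norm_sq, he]; simp
  have h3 := inner_le_lambdaMax B hB e
  have h4 : inner ℝ e (Matrix.toEuclideanCLM (𝕜 := ℝ) (A - B) e)
      ≤ ‖Matrix.toEuclideanCLM (𝕜 := ℝ) (A - B)‖ := by
    refine (real_inner_le_norm _ _).trans ?_
    have := (Matrix.toEuclideanCLM (𝕜 := ℝ) (A - B)).le_opNorm e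
    rw [he] at *
    linarith
  rw [map_sub, sub_apply, inner_sub_right, h2] at h4
  rw [he] at h3
  rw [map_sub]
  linarith

theorem abs_lambdaMax_sub_le {n : ℕ} (hn : 1 ≤ n) (A B : Matrix (Fin n) (Fin n) ℝ)
    (hA : A.IsHermitian) (hB : B.IsHermitian) :
    |lambdaMax A - lambdaMax B| ≤ ‖Matrix.toEuclideanCLM (𝕜 := ℝ) (A - B)‖ := by
  rw [abs_le]
  have h1 := lambdaMax_sub_le hn A B hA hB
  have h2 := lambdaMax_sub_le hn B A hB hA
  have : ‖Matrix.toEuclideanCLM (𝕜 := ℝ) (B - A)‖ = ‖Matrix.toEuclideanCLM (𝕜 := ℝ) (A - B)‖ := by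
    rw [map_sub, map_sub, norm_sub_rev]
  rw [this] at h2
  constructor <;> linarith

theorem mixedContraction_isHermitian {n : ℕ} (c : ℝ) (ω : GoteSpace 4 n) (u v : Fin n → ℝ) :
    (c • mixedContraction ω u v).IsHermitian := by
  have key : ∀ i j a b : Fin n, tupleSym ![j, i, a, b] = tupleSym ![i, j, a, b] := by
    intro i j a b
    apply Subtype.ext
    simp only [tupleSym]
    rw [Multiset.coe_eq_coe]
    simpa using List.Perm.swap i j [a, b]
  ext i j
  simp only [Matrix.conjTranspose_apply, Matrix.smul_apply, star_trivial, mixedContraction, gote,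
    permCount, key i j]

theorem continuous_mixedContraction {n : ℕ} (u v : Fin n → ℝ) :
    Continuous fun ω : GoteSpace 4 n => mixedContraction ω u v := by
  unfold mixedContraction gote
  fun_prop

theorem continuous_lambdaMax_mixed {n : ℕ} (hn : 1 ≤ n) (c : ℝ) (u v : Fin n → ℝ) :
    Continuous fun ω : GoteSpace 4 n => lambdaMax (c • mixedContraction ω u v) := by
  rw [continuous_iff_continuousAt]
  intro ω₀
  rw [ContinuousAt, tendsto_iff_dist_tendsto_zero]
  have hlin : Continuous (Matrix.toEuclideanCLM (𝕜 := ℝ) (n := Fin n)) :=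
    LinearMap.continuous_of_finiteDimensional
      (Matrix.toEuclideanCLM (𝕜 := ℝ) (n := Fin n)).toAlgEquiv.toLinearMap
  have hc : Continuous fun ω : GoteSpace 4 n => ‖Matrix.toEuclideanCLM (𝕜 := ℝ)
      (c • mixedContraction ω u v - c • mixedContraction ω₀ u v)‖ :=
    (hlin.comp (((continuous_mixedContraction u v).const_smul c).sub continuous_const)).norm
  have h0 := hc.tendsto ω₀
  simp only [sub_self, map_zero, norm_zero] at h0
  refine squeeze_zero (fun _ => dist_nonneg) (fun ω => ?_) h0
  rw [Real.dist_eq]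
  exact abs_lambdaMax_sub_le hn _ _ (mixedContraction_isHermitian _ _ _ _)
    (mixedContraction_isHermitian _ _ _ _)

/-- Exponential moments of a linear functional of the Gaussian coordinates. -/
theorem gauss_exp {n : ℕ} (c : Sym (Fin n) 4 → ℝ) :
    Integrable (fun ω : GoteSpace 4 n => Real.exp (∑ m, c m * ω m)) (goteMeasure 4 n) ∧
    ∫ ω : GoteSpace 4 n, Real.exp (∑ m, c m * ω m) ∂(goteMeasure 4 n)
      = Real.exp ((∑ m, c m ^ 2) / 2) := by
  simp only [Real.exp_sum]
  unfold goteMeasure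
  refine ⟨Integrable.fintype_prod (f := fun m x => Real.exp (c m * x))
    fun m => integrable_exp_mul_gaussianReal (c m), ?_⟩
  rw [integral_fintype_prod_eq_prod (fun m x => Real.exp (c m * x)), Finset.sum_div, Real.exp_sum]
  refine Finset.prod_congr rfl fun m _ => ?_
  have := mgf_gaussianReal (p := gaussianReal 0 1) (X := id) (μ := 0) (v := 1)
    Measure.map_id (c m)
  simpa [mgf] using this

/-- The rank one tensor. -/
noncomputable def rankOne {n : ℕ} (x y u w : Fin n → ℝ) (a : Fin 4 → Fin n) : ℝ :=
  x (a 0) * y (a 1) * u (a 2) * w (a 3)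

open Classical in
/-- Coefficient of the coordinate `m`. -/
noncomputable def coefOf {n : ℕ} (T : (Fin 4 → Fin n) → ℝ) (m : Sym (Fin n) 4) : ℝ :=
  ∑ a with tupleSym a = m, Real.sqrt ((4 : ℝ) / (permCount a : ℝ)) * T a

theorem sum_coefOf {n : ℕ} (T : (Fin 4 → Fin n) → ℝ) (ω : GoteSpace 4 n) :
    ∑ m, coefOf T m * ω m = ∑ a, gote ω a * T a := by
  classical
  rw [← Finset.sum_fiberwise_of_maps_to (s := Finset.univ) (t := Finset.univ)
    (g := tupleSym) (fun _ _ => Finset.mem_univ _)]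
  refine Finset.sum_congr rfl fun m _ => ?_
  rw [coefOf, Finset.sum_mul]
  refine Finset.sum_congr (by congr) fun a ha => ?_
  rw [(Finset.mem_filter.1 ha).2.symm, gote]
  push_cast
  ring

theorem coefOf_sq_le {n : ℕ} (T : (Fin 4 → Fin n) → ℝ) (m : Sym (Fin n) 4) :
    coefOf T m ^ 2 ≤ 4 * ∑ a with tupleSym a = m, T a ^ 2 := by
  classical
  rw [coefOf]
  refine (sq_sum_le_card_mul_sum_sq).trans ?_
  rw [Finset.mul_sum, Finset.mul_sum]
  refine Finset.sum_le_sum fun a ha => ?_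
  have hm := (Finset.mem_filter.1 ha).2
  have hp : (Finset.univ.filter (fun b : Fin 4 → Fin n => tupleSym b = m)).card = permCount a := by
    rw [permCount, hm]
  have hp2 : (0 : ℝ) < permCount a := by
    rw [← hp]
    exact_mod_cast Finset.card_pos.2 ⟨a, by simpa using hm⟩
  have : (0 : ℝ) ≤ 4 / permCount a := by positivity
  rw [mul_pow, Real.sq_sqrt this]
  apply le_of_eq
  have hp3 : ((Finset.univ.filter (fun b : Fin 4 → Fin n => tupleSym b = m)).card : ℝ)
    = permCount a := by exact_mod_cast hp
  rw [← mul_assoc]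
  congr 1
  trans (permCount a : ℝ) * (4 / permCount a)
  · congr 1
  · field_simp

theorem sum_coefOf_sq_le {n : ℕ} (T : (Fin 4 → Fin n) → ℝ) :
    ∑ m, coefOf T m ^ 2 ≤ 4 * ∑ a, T a ^ 2 := by
  classical
  rw [← Finset.sum_fiberwise_of_maps_to (s := Finset.univ) (t := Finset.univ)
    (g := tupleSym) (fun _ _ => Finset.mem_univ _), Finset.mul_sum]
  refine Finset.sum_le_sum fun m _ => ?_
  convert coefOf_sq_le T m

theorem sum_tuple {n : ℕ} (f : (Fin 4 → Fin n) → ℝ) :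
    ∑ a, f a = ∑ i, ∑ j, ∑ a, ∑ b, f ![i, j, a, b] := by
  simp only [← Fintype.sum_prod_type']
  symm
  refine Fintype.sum_bijective (fun p : Fin n × Fin n × Fin n × Fin n =>
    ![p.1, p.2.1, p.2.2.1, p.2.2.2]) ?_ _ _ (fun _ => rfl)
  constructor
  · rintro ⟨i, j, a, b⟩ ⟨i', j', a', b'⟩ h
    have h0 := congrFun h 0
    have h1 := congrFun h 1
    have h2 := congrFun h 2
    have h3 := congrFun h 3
    simp at h0 h1 h2 h3
    simp [h0, h1, h2, h3]
  · intro a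
    refine ⟨(a 0, a 1, a 2, a 3), ?_⟩
    ext k
    fin_cases k <;> rfl

theorem sum_rankOne_sq {n : ℕ} (x y u w : Fin n → ℝ) :
    ∑ a, rankOne x y u w a ^ 2
      = (∑ i, x i ^ 2) * (∑ i, y i ^ 2) * (∑ i, u i ^ 2) * (∑ i, w i ^ 2) := by
  rw [sum_tuple]
  simp only [rankOne, mul_pow, Matrix.cons_val]
  simp only [← Finset.mul_sum, ← Finset.sum_mul]

theorem inner_mixed {n : ℕ} (ω : GoteSpace 4 n) (u w : Fin n → ℝ)
    (x y : EuclideanSpace ℝ (Fin n)) :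
    inner ℝ x (Matrix.toEuclideanCLM (𝕜 := ℝ) (mixedContraction ω u w) y)
      = ∑ m, coefOf (rankOne x.ofLp y.ofLp u w) m * ω m := by
  rw [sum_coefOf, sum_tuple, PiLp.inner_apply]
  refine Finset.sum_congr rfl fun i _ => ?_
  rw [Matrix.ofLp_toEuclideanCLM]
  simp only [Matrix.mulVec, dotProduct, mixedContraction, rankOne, Matrix.cons_val,
    RCLike.inner_apply, conj_trivial, Finset.sum_mul]
  refine Finset.sum_congr rfl fun j _ => Finset.sum_congr rfl fun a _ =>
    Finset.sum_congr rfl fun b _ => ?_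
  ring

/-- Exponential moment bound for the bilinear form. -/
theorem exp_inner_mixed {n : ℕ} (u w : Fin n → ℝ) (hu : ∑ i, u i ^ 2 = 1)
    (x y : EuclideanSpace ℝ (Fin n)) (hx : ‖x‖ ≤ 1) (hy : ‖y‖ ≤ 1) (t : ℝ) :
    Integrable (fun ω : GoteSpace 4 n => Real.exp (t * inner ℝ x
      (Matrix.toEuclideanCLM (𝕜 := ℝ) (mixedContraction ω u w) y))) (goteMeasure 4 n) ∧
    ∫ ω : GoteSpace 4 n, Real.exp (t * inner ℝ x
      (Matrix.toEuclideanCLM (𝕜 := ℝ) (mixedContraction ω u w) y)) ∂(goteMeasure 4 n)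
      ≤ Real.exp (2 * t ^ 2 * ∑ i, w i ^ 2) := by
  have hx2 : ∑ i, x.ofLp i ^ 2 ≤ 1 := by
    rw [← EuclideanSpace.real_norm_sq_eq]
    exact pow_le_one₀ (norm_nonneg _) hx
  have hy2 : ∑ i, y.ofLp i ^ 2 ≤ 1 := by
    rw [← EuclideanSpace.real_norm_sq_eq]
    exact pow_le_one₀ (norm_nonneg _) hy
  simp only [inner_mixed, Finset.mul_sum (a := t), ← mul_assoc t]
  obtain ⟨h1, h2⟩ := gauss_exp (fun m => t * coefOf (rankOne x.ofLp y.ofLp u w) m)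
  refine ⟨h1, ?_⟩
  rw [h2, Real.exp_le_exp]
  simp only [mul_pow, ← Finset.mul_sum]
  have h3 := sum_coefOf_sq_le (rankOne x.ofLp y.ofLp u w)
  rw [sum_rankOne_sq, hu, mul_one] at h3
  have h4 : (∑ i, x.ofLp i ^ 2) * (∑ i, y.ofLp i ^ 2) ≤ 1 :=
    mul_le_one₀ hx2 (Finset.sum_nonneg fun _ _ => sq_nonneg _) hy2
  have h5 : (0 : ℝ) ≤ ∑ i, w i ^ 2 := Finset.sum_nonneg fun _ _ => sq_nonneg _
  have h6 := mul_le_mul_of_nonneg_right h4 h5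
  have h7 := mul_le_mul_of_nonneg_left (h3.trans (mul_le_mul_of_nonneg_left h6 (by norm_num)))
    (sq_nonneg t)
  linarith

theorem le_sum_real {ι : Type*} (s : Finset ι) (f : ι → ℝ) (h : ∀ i ∈ s, 0 ≤ f i)
    (i : ι) (hi : i ∈ s) : f i ≤ ∑ j ∈ s, f j :=
  Finset.single_le_sum h hi

set_option maxHeartbeats 1000000 in
/-- Domination of the operator norm of the mixed contraction by an integrable function
with small integral. -/
theorem exists_dominating {n : ℕ} (hn : 1 ≤ n) (u w : Fin n → ℝ) (hu : ∑ i, u i ^ 2 = 1)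
    (d : ℝ) (hd : 0 < d) (hw : ∑ i, w i ^ 2 = d ^ 2) :
    ∃ h : GoteSpace 4 n → ℝ, Integrable h (goteMeasure 4 n) ∧
      (∀ ω, ‖Matrix.toEuclideanCLM (𝕜 := ℝ) (mixedContraction ω u w)‖ ≤ h ω) ∧
      ∫ ω, h ω ∂(goteMeasure 4 n) ≤ 24 * d * Real.sqrt n := by
  classical
  obtain ⟨N, hNc, hN1, hN2⟩ := exists_half_net n
  have hn0 : (0 : ℝ) < n := by exact_mod_cast hn
  set s := Real.sqrt n with hs
  have hs0 : 0 < s := Real.sqrt_pos.2 hn0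
  have hs2 : s ^ 2 = n := Real.sq_sqrt hn0.le
  set t := s / d with ht
  have ht0 : 0 < t := by positivity
  let L : ℝ := 6 * n
  let I : GoteSpace 4 n → EuclideanSpace ℝ (Fin n) × EuclideanSpace ℝ (Fin n) → ℝ :=
    fun ω p => Real.exp (t * inner ℝ p.1
      (Matrix.toEuclideanCLM (𝕜 := ℝ) (mixedContraction ω u w) p.2))
  let S : GoteSpace 4 n → ℝ := fun ω => ∑ p ∈ N ×ˢ N, I ω p
  have hSint : Integrable S (goteMeasure 4 n) := by
    refine integrable_finsetSum _ fun p hp => ?_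
    have hp := Finset.mem_product.1 hp
    exact (exp_inner_mixed u w hu p.1 p.2 (hN1 _ hp.1) (hN1 _ hp.2) t).1
  have h25 : (25 : ℝ) ≤ Real.exp 4 := by
    have h := Real.exp_one_gt_d9
    have : Real.exp 4 = Real.exp 1 ^ 4 := by rw [← Real.exp_nat_mul]; norm_num
    rw [this]
    calc (25 : ℝ) ≤ 2.7 ^ 4 := by norm_num
      _ ≤ Real.exp 1 ^ 4 := by gcongr; linarith
  have hSle : ∫ ω, S ω ∂(goteMeasure 4 n) ≤ Real.exp L := by
    rw [integral_finsetSum _ fun p hp => by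
      have hp := Finset.mem_product.1 hp
      exact (exp_inner_mixed u w hu p.1 p.2 (hN1 _ hp.1) (hN1 _ hp.2) t).1]
    have : ∀ p ∈ N ×ˢ N, ∫ ω, I ω p ∂(goteMeasure 4 n) ≤ Real.exp (2 * n) := by
      intro p hp
      have hp := Finset.mem_product.1 hp
      refine (exp_inner_mixed u w hu p.1 p.2 (hN1 _ hp.1) (hN1 _ hp.2) t).2.trans ?_
      rw [hw, ht, div_pow, hs2]
      apply le_of_eq
      congr 1
      field_simp
    refine (Finset.sum_le_card_nsmul _ _ _ this).trans ?_
    rw [nsmul_eq_mul, Finset.card_product]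
    have hc : ((N.card * N.card : ℕ) : ℝ) ≤ Real.exp 4 ^ n := by
      calc ((N.card * N.card : ℕ) : ℝ) ≤ ((5 ^ n * 5 ^ n : ℕ) : ℝ) := by
            exact_mod_cast Nat.mul_le_mul hNc hNc
        _ = 25 ^ n := by push_cast; rw [← mul_pow]; norm_num
        _ ≤ _ := by gcongr
    calc _ ≤ Real.exp 4 ^ n * Real.exp (2 * n) := by gcongr
      _ = Real.exp L := by
        rw [← Real.exp_nat_mul, ← Real.exp_add]
        congr 1
        simp only [L]
        ring
  have hSge : ∀ ω, ∀ x ∈ N, ∀ y ∈ N, Real.exp (t * inner ℝ x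
      (Matrix.toEuclideanCLM (𝕜 := ℝ) (mixedContraction ω u w) y)) ≤ S ω := by
    intro ω x hx y hy
    have h0 : ∀ p ∈ N ×ˢ N, 0 ≤ I ω p := fun p _ => (Real.exp_pos _).le
    have hmem : (x, y) ∈ N ×ˢ N := Finset.mk_mem_product hx hy
    exact le_sum_real (N ×ˢ N) (I ω) h0 (x, y) hmem
  clear_value S s t
  refine ⟨fun ω => 4 * (t⁻¹ * (S ω * Real.exp (-L) - 1 + L)), ?_, ?_, ?_⟩
  · exact ((((hSint.mul_const _).sub (integrable_const _)).add (integrable_const _)).const_mul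
      _).const_mul _
  · intro ω
    refine opNorm_le_of_net N hN2 _ _ fun x hx y hy => ?_
    rw [← div_eq_inv_mul, le_div_iff₀ ht0]
    have h1 := hSge ω x hx y hy
    generalize inner ℝ x (Matrix.toEuclideanCLM (𝕜 := ℝ) (mixedContraction ω u w) y) = z at h1 ⊢
    have h2 := Real.add_one_le_exp (t * z - L)
    have h3 : Real.exp (t * z - L) ≤ S ω * Real.exp (-L) := by
      rw [sub_eq_add_neg, Real.exp_add]
      gcongr
    linarith
  · rw [integral_const_mul, integral_const_mul,
      integral_add (f := fun ω => S ω * Real.exp (-L) - 1)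
        ((hSint.mul_const _).sub (integrable_const _)) (integrable_const _),
      integral_sub (hSint.mul_const _) (integrable_const _), integral_mul_const]
    simp only [integral_const, probReal_univ, smul_eq_mul, one_mul]
    have h1 : (∫ ω, S ω ∂(goteMeasure 4 n)) * Real.exp (-L) ≤ 1 := by
      calc _ ≤ Real.exp L * Real.exp (-L) := by gcongr
        _ = 1 := by rw [← Real.exp_add]; simp
    have h2 : t⁻¹ * ((∫ ω, S ω ∂(goteMeasure 4 n)) * Real.exp (-L) - 1 + L) ≤ t⁻¹ * L := by
      gcongr
      linarith
    have h3 : t⁻¹ * L = 6 * d * s := by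
      simp only [L, ht, ← hs2]
      field_simp
    linarith

theorem abs_integral_sub_le_of_dom {Ω : Type*} [MeasurableSpace Ω] (μ : Measure Ω)
    (f g h : Ω → ℝ) (hf : AEStronglyMeasurable f μ) (hg : AEStronglyMeasurable g μ)
    (hh : Integrable h μ) (hb : ∀ ω, |f ω - g ω| ≤ h ω) :
    |∫ ω, f ω ∂μ - ∫ ω, g ω ∂μ| ≤ ∫ ω, h ω ∂μ := by
  have hfg : Integrable (fun ω => f ω - g ω) μ :=
    hh.mono' (hf.sub hg) (Eventually.of_forall hb)
  have hnn : 0 ≤ ∫ ω, h ω ∂μ := integral_nonneg fun ω => (abs_nonneg _).trans (hb ω)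
  by_cases hgi : Integrable g μ
  · have hfi : Integrable f μ := by
      have := hfg.add hgi
      refine this.congr (Eventually.of_forall fun ω => ?_)
      simp
    rw [← integral_sub hfi hgi]
    exact norm_integral_le_of_norm_le (f := fun ω => f ω - g ω) hh (Eventually.of_forall hb)
  · have hfi : ¬ Integrable f μ := fun hfi => hgi (by
      refine (hfi.sub hfg).congr (Eventually.of_forall fun ω => ?_)
      simp)
    rw [integral_undef hgi, integral_undef hfi]
    simpa using hnn

theorem main_bound (n : ℕ) (hn : 1 ≤ n) (u v : Fin n → ℝ) (hu : ∑ i, u i ^ 2 = 1) :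
    |(∫ ω, lambdaMax ((Real.sqrt n)⁻¹ • mixedContraction ω u v) ∂(goteMeasure 4 n))
          - ∫ ω, lambdaMax ((Real.sqrt n)⁻¹ • mixedContraction ω u u) ∂(goteMeasure 4 n)|
      ≤ 24 * Real.sqrt (∑ i, (u i - v i) ^ 2) := by
  set d := Real.sqrt (∑ i, (u i - v i) ^ 2) with hd
  have hnn : 0 ≤ ∑ i, (u i - v i) ^ 2 := Finset.sum_nonneg fun _ _ => sq_nonneg _
  have hd2 : ∑ i, (u i - v i) ^ 2 = d ^ 2 := (Real.sq_sqrt hnn).symm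
  have hd0 : 0 ≤ d := Real.sqrt_nonneg _
  clear_value d
  rcases hd0.eq_or_lt with h0 | hpos
  · have : u = v := by
      rw [← h0] at hd2
      funext i
      have := (Finset.sum_eq_zero_iff_of_nonneg (fun i _ => sq_nonneg (u i - v i))).1
        (by simpa using hd2) i (Finset.mem_univ i)
      have := pow_eq_zero_iff (two_ne_zero) |>.1 this
      linarith
    rw [← this]
    simp [← h0]
  · have hn0 : (0 : ℝ) < n := by exact_mod_cast hn
    have hs0 : 0 < Real.sqrt n := Real.sqrt_pos.2 hn0
    obtain ⟨h, hint, hdom, hle⟩ := exists_dominating hn u (fun i => u i - v i) hu d hpos hd2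
    refine (abs_integral_sub_le_of_dom (goteMeasure 4 n) _ _
      (fun ω => (Real.sqrt n)⁻¹ * h ω)
      (continuous_lambdaMax_mixed hn _ u v).aestronglyMeasurable
      (continuous_lambdaMax_mixed hn _ u u).aestronglyMeasurable
      (hint.const_mul _) fun ω => ?_).trans ?_
    · rw [abs_sub_comm]
      refine (abs_lambdaMax_sub_le hn _ _ (mixedContraction_isHermitian _ _ _ _)
        (mixedContraction_isHermitian _ _ _ _)).trans ?_
      have : (Real.sqrt n)⁻¹ • mixedContraction ω u u - (Real.sqrt n)⁻¹ • mixedContraction ω u v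
          = (Real.sqrt n)⁻¹ • mixedContraction ω u (fun i => u i - v i) := by
        rw [← smul_sub]
        congr 1
        ext i j
        simp only [mixedContraction, Matrix.sub_apply, ← Finset.sum_sub_distrib]
        refine Finset.sum_congr rfl fun a _ => Finset.sum_congr rfl fun b _ => ?_
        ring
      rw [this, map_smul, norm_smul, Real.norm_of_nonneg (inv_nonneg.2 hs0.le)]
      exact mul_le_mul_of_nonneg_left (hdom ω) (inv_nonneg.2 hs0.le)
    · rw [integral_const_mul, ← div_eq_inv_mul, div_le_iff₀ hs0]
      exact hle

/-- **Comparison of expected largest eigenvalues of mixed and pure contractions.**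
There exist universal constants `C₁, C₂ > 0` such that for all `n ≥ 1`, unit vectors
`u, v` and `ε ∈ (0,1)`,
`|E λ₁(n^{−1/2}G·u⊗v) − E λ₁(n^{−1/2}G·u⊗u)| ≤ C₁ε + C₂√(‖u−v‖₂·log(1/ε))`. -/
theorem expected_top_eigenvalue_comparison :
    ∃ C₁ : ℝ, 0 < C₁ ∧ ∃ C₂ : ℝ, 0 < C₂ ∧
      ∀ n : ℕ, 1 ≤ n → ∀ u v : Fin n → ℝ,
        (∑ i, u i ^ 2 = 1) → (∑ i, v i ^ 2 = 1) →
        ∀ ε : ℝ, 0 < ε → ε < 1 →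
        |(∫ ω, lambdaMax ((Real.sqrt n)⁻¹ • mixedContraction ω u v) ∂(goteMeasure 4 n))
          - ∫ ω, lambdaMax ((Real.sqrt n)⁻¹ • mixedContraction ω u u) ∂(goteMeasure 4 n)|
          ≤ C₁ * ε + C₂ * Real.sqrt (Real.sqrt (∑ i, (u i - v i) ^ 2) * Real.log (1 / ε)) := by
  refine ⟨144, by norm_num, 48, by norm_num, fun n hn u v hu hv ε hε hε1 => ?_⟩
  refine (main_bound n hn u v hu).trans ?_
  set d := Real.sqrt (∑ i, (u i - v i) ^ 2) with hd
  have hd0 : 0 ≤ d := Real.sqrt_nonneg _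
  have hd2 : d ≤ 2 := by
    rw [hd, Real.sqrt_le_iff]
    refine ⟨by norm_num, ?_⟩
    have : ∑ i, (u i - v i) ^ 2 ≤ ∑ i, (2 * u i ^ 2 + 2 * v i ^ 2) :=
      Finset.sum_le_sum fun i _ => by nlinarith [sq_nonneg (u i + v i)]
    rw [Finset.sum_add_distrib, ← Finset.mul_sum, ← Finset.mul_sum, hu, hv] at this
    linarith
  by_cases hL : 1 ≤ Real.log (1 / ε)
  · have h1 : d / 2 ≤ Real.sqrt (d * Real.log (1 / ε)) := by
      apply Real.le_sqrt_of_sq_le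
      nlinarith [mul_le_mul_of_nonneg_left hL hd0]
    linarith
  · push Not at hL
    have h1 : 1 / ε < Real.exp 1 := by
      rwa [← Real.log_lt_iff_lt_exp (by positivity)]
    have h2 : 1 / ε < 3 := h1.trans (by have := Real.exp_one_lt_d9; linarith)
    rw [div_lt_iff₀ hε] at h2
    have := Real.sqrt_nonneg (d * Real.log (1 / ε))
    linarith
end

section
/- Fix integers r ≥ 3 and n ≥ 4, let G be a GOTE(r,n) tensor, w ∈ ℝⁿ a unit vector, M = G·w^{⊗(r−2)} the pure contraction, and set α² = (r−2)(r−3)/(r−1), β² = (r−2)/(r−1), θ² = 1/(r−1). Then for any pairwise distinct indices i, j, k, l ∈ {1,…,n}: Var(M_{ii}) = 2θ² + 4β²w_i² + α²w_i⁴; Var(M_{ij}) = θ² + β²(w_i² + w_j²) + α²w_i²w_j²; Cov(M_{ij}, M_{kl}) = α²w_i w_j w_k w_l; Cov(M_{ii}, M_{kl}) = α²w_i²w_k w_l; Cov(M_{ii}, M_{kk}) = α²w_i²w_k²; Cov(M_{ij}, M_{il}) = β²w_j w_l + α²w_i²w_j w_l; and Cov(M_{ii}, M_{il}) = 2β²w_i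 w_l + α²w_i³w_l. -/
open MeasureTheory ProbabilityTheory Filter

/-- The covariance `Cov(X,Y) = E[(X − EX)(Y − EY)]` of two real random variables. -/
noncomputable def covar {Ω : Type*} [MeasurableSpace Ω] (μ : Measure Ω) (X Y : Ω → ℝ) : ℝ :=
  ∫ ω, (X ω - ∫ ω', X ω' ∂μ) * (Y ω - ∫ ω', Y ω' ∂μ) ∂μ

/-- The variance `Var(X) = E[(X − EX)²]` of a real random variable. -/
noncomputable def var {Ω : Type*} [MeasurableSpace Ω] (μ : Measure Ω) (X : Ω → ℝ) : ℝ :=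
  covar μ X X

lemma tupleSym_eq_iff {n r : ℕ} (a b : Fin r → Fin n) :
    tupleSym b = tupleSym a ↔ ∃ σ : Equiv.Perm (Fin r), b = a ∘ σ := by
  constructor
  · intro h
    have h1 : (List.ofFn b).Perm (List.ofFn a) := by
      have := congrArg Subtype.val h
      exact Multiset.coe_eq_coe.mp this
    have h2 : List.ofFn (b ∘ Tuple.sort b) = List.ofFn (a ∘ Tuple.sort a) :=
      ((((Tuple.sort b).ofFn_comp_perm b).trans h1).trans
        ((Tuple.sort a).ofFn_comp_perm a).symm).eq_of_pairwise'
        (Tuple.monotone_sort b).sortedLE_ofFn.pairwise (Tuple.monotone_sort a).sortedLE_ofFn.pairwise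
    have h3 := List.ofFn_injective h2
    refine ⟨(Tuple.sort b).symm.trans (Tuple.sort a), ?_⟩
    funext t
    have := congrFun h3 ((Tuple.sort b).symm t)
    simpa using this
  · rintro ⟨σ, rfl⟩
    apply Subtype.ext
    exact Multiset.coe_eq_coe.mpr (σ.ofFn_comp_perm a)

lemma permCount_congr {n r : ℕ} {a b : Fin r → Fin n} (h : tupleSym a = tupleSym b) :
    permCount a = permCount b := by
  unfold permCount; rw [h]

lemma permCount_pos {n r : ℕ} (a : Fin r → Fin n) : 0 < permCount a := by
  unfold permCount
  exact Finset.card_pos.mpr ⟨a, by simp⟩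

lemma card_fiber {n r : ℕ} (a b : Fin r → Fin n) (h : tupleSym a = tupleSym b) :
    (∑ σ : Equiv.Perm (Fin r), if b = a ∘ σ then (1 : ℝ) else 0)
      = ∑ σ : Equiv.Perm (Fin r), if a = a ∘ σ then (1 : ℝ) else 0 := by
  obtain ⟨τ, hτ⟩ := (tupleSym_eq_iff a b).mp h.symm
  rw [← Equiv.sum_comp (Equiv.mulRight τ)]
  refine Finset.sum_congr rfl fun σ _ => ?_
  have : (b = a ∘ ⇑(Equiv.mulRight τ σ)) ↔ a = a ∘ σ := by
    rw [hτ]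
    constructor
    · intro h
      funext t
      have := congrFun h (τ.symm t)
      simpa using this
    · intro h
      funext t
      have := congrFun h (τ t)
      simpa using this
  simp only [this]

lemma perm_sum {n r : ℕ} (a b : Fin r → Fin n) :
    (if tupleSym a = tupleSym b then (1 : ℝ) / permCount a else 0)
      = 1 / (r.factorial : ℝ) * ∑ σ : Equiv.Perm (Fin r), if b = a ∘ σ then (1 : ℝ) else 0 := by
  have hz : ∀ b, tupleSym a ≠ tupleSym b →
      (∑ σ : Equiv.Perm (Fin r), if b = a ∘ σ then (1 : ℝ) else 0) = 0 := by
    intro b hb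
    refine Finset.sum_eq_zero fun σ _ => if_neg fun h => hb ?_
    exact ((tupleSym_eq_iff a b).mpr ⟨σ, h⟩).symm
  set N := ∑ σ : Equiv.Perm (Fin r), if a = a ∘ σ then (1 : ℝ) else 0 with hN
  have htot : (permCount a : ℝ) * N = r.factorial := by
    have h1 : ∑ b : Fin r → Fin n, (∑ σ : Equiv.Perm (Fin r), if b = a ∘ σ then (1 : ℝ) else 0)
        = r.factorial := by
      rw [Finset.sum_comm]
      simp [Fintype.card_perm]
    rw [← h1]
    have h2 : ∀ b : Fin r → Fin n,
        (∑ σ : Equiv.Perm (Fin r), if b = a ∘ σ then (1 : ℝ) else 0)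
          = if tupleSym b = tupleSym a then N else 0 := by
      intro b
      split_ifs with h
      · exact card_fiber a b h.symm
      · exact hz b (fun h' => h h'.symm)
    simp only [h2]
    rw [← Finset.sum_filter, Finset.sum_const, nsmul_eq_mul]
    rfl
  split_ifs with h
  · rw [card_fiber a b h, ← hN]
    have h1 : (permCount a : ℝ) ≠ 0 := by exact_mod_cast (permCount_pos a).ne'
    have h2 : (r.factorial : ℝ) ≠ 0 := by exact_mod_cast r.factorial_ne_zero
    field_simp
    linarith
  · rw [hz b h, mul_zero]

/-- Weight functions of the tuple positions. -/
noncomputable def phi {n m : ℕ} (w : Fin n → ℝ) (i j : Fin n) : Fin (m + 2) → Fin n → ℝ :=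
  Fin.cons (fun x => if x = i then 1 else 0)
    (Fin.cons (fun x => if x = j then 1 else 0) (fun _ => w))

lemma glue_eq {n m : ℕ} (i j : Fin n) (f : Fin m → Fin n) :
    (glue (r := m + 2) i j f : Fin (m + 2) → Fin n) = Fin.cons i (Fin.cons j f) := by
  funext t
  refine Fin.cases ?_ (fun t => Fin.cases ?_ (fun t => ?_) t) t
  · simp [glue]
  · simp [glue]
  · simp [glue]

lemma sum_cons {n m : ℕ} (F : (Fin (m + 1) → Fin n) → ℝ) :
    ∑ a, F a = ∑ x : Fin n, ∑ f : Fin m → Fin n, F (Fin.cons x f) := by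
  rw [← Equiv.sum_comp (Fin.consEquiv (fun _ : Fin (m + 1) => Fin n)), Fintype.sum_prod_type]
  rfl

lemma sum_glue {n m : ℕ} (w : Fin n → ℝ) (i j : Fin n) (F : (Fin (m + 2) → Fin n) → ℝ) :
    ∑ f : Fin m → Fin n, F (glue (r := m + 2) i j f) * ∏ k, w (f k)
      = ∑ a, F a * ∏ t, phi w i j t (a t) := by
  rw [sum_cons]
  simp only [sum_cons (m := m), Fin.prod_univ_succ, phi, Fin.cons_zero, Fin.cons_succ, glue_eq]
  rw [Finset.sum_eq_single i, Finset.sum_eq_single j]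
  · simp
  · intro x _ hx; simp [hx]
  · simp
  · intro x _ hx; simp [hx]
  · simp

lemma memLp_coord {r n : ℕ} (s : Sym (Fin n) r) :
    MemLp (fun ω : GoteSpace r n => ω s) 2 (goteMeasure r n) := by
  have := (memLp_id_gaussianReal' (μ := 0) (v := 1) 2 (by simp)).comp_measurePreserving
    (measurePreserving_eval (fun _ : Sym (Fin n) r => gaussianReal 0 1) s)
  exact this

lemma cov_coord {r n : ℕ} (s t : Sym (Fin n) r) :
    cov[fun ω : GoteSpace r n => ω s, fun ω => ω t; goteMeasure r n]
      = if s = t then 1 else 0 := by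
  split_ifs with h
  · subst h
    rw [covariance_self (memLp_coord s).aestronglyMeasurable.aemeasurable]
    have h1 := (measurePreserving_eval (fun _ : Sym (Fin n) r => gaussianReal 0 1) s)
    have h2 := variance_id_gaussianReal (μ := 0) (v := 1)
    rw [← h1.map_eq, variance_map (by fun_prop) h1.measurable.aemeasurable] at h2
    simp only [NNReal.coe_one] at h2
    exact h2
  · have := iIndepFun_pi (μ := fun _ : Sym (Fin n) r => gaussianReal 0 1)
      (X := fun _ => id) (fun _ => by fun_prop)
    exact (this.indepFun h).covariance_eq_zero (memLp_coord s) (memLp_coord t)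

lemma sum_swap {m : ℕ} (p : Fin (m + 1)) (G : Fin (m + 1) → ℝ) :
    ∑ q : Fin m, G (Equiv.swap 0 p q.succ) = ∑ x, if x = p then 0 else G x := by
  have h := Equiv.sum_comp (Equiv.swap 0 p) (fun x => if x = p then 0 else G x)
  rw [← h, Fin.sum_univ_succ]
  simp only [Equiv.swap_apply_left, if_true, zero_add]
  refine Finset.sum_congr rfl fun q _ => ?_
  rw [if_neg]
  intro h
  have : q.succ = 0 := by
    apply (Equiv.swap 0 p).injective
    rw [h, Equiv.swap_apply_left]
  exact Fin.succ_ne_zero _ this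

lemma sum_perm_two {m : ℕ} (F : Fin (m + 2) → Fin (m + 2) → ℝ) :
    ∑ σ : Equiv.Perm (Fin (m + 2)), F (σ 0) (σ 1)
      = m.factorial * ∑ p, ∑ q, if q = p then 0 else F p q := by
  rw [← Equiv.sum_comp Equiv.Perm.decomposeFin.symm, Fintype.sum_prod_type, Finset.mul_sum]
  refine Finset.sum_congr rfl fun p _ => ?_
  simp only [Equiv.Perm.decomposeFin_symm_apply_zero, Equiv.Perm.decomposeFin_symm_apply_one]
  rw [← Equiv.sum_comp Equiv.Perm.decomposeFin.symm, Fintype.sum_prod_type]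
  simp only [Equiv.Perm.decomposeFin_symm_apply_zero]
  rw [← sum_swap p (F p)]
  simp [Finset.mul_sum, Fintype.card_perm]

lemma prod_special {m : ℕ} (c : Fin (m + 2) → ℝ) (hc : ∀ t : Fin m, c t.succ.succ = 1)
    (σ : Equiv.Perm (Fin (m + 2))) :
    ∏ s : Fin m, c (σ s.succ.succ)
      = (if σ 0 = 0 ∨ σ 1 = 0 then 1 else c 0) * (if σ 0 = 1 ∨ σ 1 = 1 then 1 else c 1) := by
  have h := Equiv.prod_comp σ (fun t => if σ 0 = t ∨ σ 1 = t then 1 else c t)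
  rw [Fin.prod_univ_succ, Fin.prod_univ_succ] at h
  have hR : (∏ t, if σ 0 = t ∨ σ 1 = t then 1 else c t)
      = (if σ 0 = 0 ∨ σ 1 = 0 then 1 else c 0) * (if σ 0 = 1 ∨ σ 1 = 1 then 1 else c 1) := by
    rw [Fin.prod_univ_succ, Fin.prod_univ_succ]
    simp only [hc, ite_self, Finset.prod_const_one, mul_one]
    rfl
  rw [hR] at h
  have e1 : ∀ s : Fin m, (0 : Fin (m+2)) ≠ s.succ.succ := fun s => (Fin.succ_ne_zero _).symm
  have e2 : ∀ s : Fin m, (1 : Fin (m+2)) ≠ s.succ.succ := fun s => by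
    rw [← Fin.succ_zero_eq_one]
    exact fun h => Fin.succ_ne_zero _ (Fin.succ_injective _ h).symm
  rw [← h]
  simp only [Fin.succ_zero_eq_one, EmbeddingLike.apply_eq_iff_eq, e1, e2, true_or,
    or_true, if_true, or_self, if_false, one_mul]

lemma perm_eval {m : ℕ} (u v c : Fin (m + 2) → ℝ) (x y : ℝ)
    (hu : ∀ t : Fin m, u t.succ.succ = x) (hv : ∀ t : Fin m, v t.succ.succ = y)
    (hc : ∀ t : Fin m, c t.succ.succ = 1) :
    ∑ σ : Equiv.Perm (Fin (m + 2)), u (σ 0) * (v (σ 1) * ∏ s : Fin m, c (σ s.succ.succ))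
      = m.factorial * (u 0 * v 1 + u 1 * v 0 + m * (u 0 * y * c 1 + u 1 * y * c 0)
        + m * (x * v 0 * c 1 + x * v 1 * c 0) + m * (m - 1) * (x * y * c 0 * c 1)) := by
  simp only [prod_special c hc]
  rw [sum_perm_two (fun p q => u p * (v q * ((if p = 0 ∨ q = 0 then 1 else c 0) *
    (if p = 1 ∨ q = 1 then 1 else c 1))))]
  congr 1
  have e1 : ∀ s : Fin m, s.succ.succ ≠ (0 : Fin (m+2)) := fun s => Fin.succ_ne_zero _
  have e2 : ∀ s : Fin m, s.succ.succ ≠ (1 : Fin (m+2)) := fun s => by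
    rw [← Fin.succ_zero_eq_one]
    exact fun h => Fin.succ_ne_zero _ (Fin.succ_injective _ h)
  have e3 : ∀ X : ℝ, ∀ p : Fin m, (∑ q : Fin m, if q = p then 0 else X) = (m - 1) * X := by
    intro X p
    have : ∀ q : Fin m, (if q = p then 0 else X) = X - if q = p then X else 0 := by
      intro q; split_ifs <;> simp
    simp only [this, Finset.sum_sub_distrib]
    simp; ring
  simp only [Fin.sum_univ_succ, Fin.succ_zero_eq_one, hu, hv, e1, e2, (e1 _).symm, (e2 _).symm,
    Fin.succ_inj, Fin.succ_ne_zero, (Fin.succ_ne_zero _).symm, e3, if_true, if_false, true_or, or_true, or_self, or_false, false_or,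
    zero_ne_one, one_ne_zero, Finset.sum_const, Finset.card_univ, Fintype.card_fin, nsmul_eq_mul]
  ring

lemma cov_general {m n : ℕ} (w : Fin n → ℝ) (hw : ∑ i, w i ^ 2 = 1) (i j k l : Fin n) :
    covar (goteMeasure (m + 2) n) (fun ω => pureContraction ω w i j)
        (fun ω => pureContraction ω w k l)
      = 1 / ((m : ℝ) + 1) * ((if i = k then 1 else 0) * (if j = l then 1 else 0)
        + (if i = l then 1 else 0) * (if j = k then 1 else 0)
        + m * ((if i = k then 1 else 0) * w j * w l + (if i = l then 1 else 0) * w j * w k)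
        + m * (w i * (if j = k then 1 else 0) * w l + w i * (if j = l then 1 else 0) * w k)
        + m * (m - 1) * (w i * w j * w k * w l)) := by
  have hM : ∀ i j : Fin n, (fun ω : GoteSpace (m + 2) n => pureContraction ω w i j)
      = fun ω => ∑ a : Fin (m + 2) → Fin n,
        (√(((m + 2 : ℕ) : ℝ) / permCount a) * ∏ t, phi w i j t (a t)) * ω (tupleSym a) := by
    intro i j
    funext ω
    have := sum_glue w i j (fun a => gote ω a)
    unfold pureContraction
    refine this.trans (Finset.sum_congr rfl fun a _ => ?_)
    simp only [gote]; ring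
  rw [hM, hM]
  change cov[_, _; _] = _
  rw [covariance_fun_sum_fun_sum (fun a => (memLp_coord _).const_mul _)
    (fun a => (memLp_coord _).const_mul _)]
  simp only [covariance_const_mul_left]
  simp only [covariance_const_mul_right, cov_coord]
  have hterm : ∀ a b : Fin (m + 2) → Fin n,
      (√(((m + 2 : ℕ) : ℝ) / permCount a) * ∏ t, phi w i j t (a t)) *
        ((√(((m + 2 : ℕ) : ℝ) / permCount b) * ∏ t, phi w k l t (b t)) *
          (if tupleSym a = tupleSym b then 1 else 0))
      = (((m + 2 : ℕ) : ℝ) / ((m + 2).factorial : ℝ)) * ∑ σ : Equiv.Perm (Fin (m + 2)),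
        if b = a ∘ σ then (∏ t, phi w i j t (a t)) * ∏ t, phi w k l t (b t) else 0 := by
    intro a b
    have h1 := perm_sum a b
    have h2 : (√(((m + 2 : ℕ) : ℝ) / permCount a) * ∏ t, phi w i j t (a t)) *
        ((√(((m + 2 : ℕ) : ℝ) / permCount b) * ∏ t, phi w k l t (b t)) *
          (if tupleSym a = tupleSym b then 1 else 0))
        = ((m + 2 : ℕ) : ℝ) * ((∏ t, phi w i j t (a t)) * ∏ t, phi w k l t (b t)) *
          (if tupleSym a = tupleSym b then (1 : ℝ) / permCount a else 0) := by
      split_ifs with h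
      · rw [← permCount_congr h]
        have := Real.mul_self_sqrt (show 0 ≤ ((m + 2 : ℕ) : ℝ) / permCount a by positivity)
        linear_combination ((∏ t, phi w i j t (a t)) * ∏ t, phi w k l t (b t)) * this
      · simp
    rw [h2, h1]
    have h3 : (∑ σ : Equiv.Perm (Fin (m + 2)),
        if b = a ∘ σ then (∏ t, phi w i j t (a t)) * ∏ t, phi w k l t (b t) else 0)
        = ((∏ t, phi w i j t (a t)) * ∏ t, phi w k l t (b t)) *
          ∑ σ : Equiv.Perm (Fin (m + 2)), if b = a ∘ σ then (1 : ℝ) else 0 := by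
      rw [Finset.mul_sum]
      refine Finset.sum_congr rfl fun σ _ => ?_
      split_ifs <;> simp
    rw [h3]
    ring
  simp only [hterm, ← Finset.mul_sum]
  have hswap : ∀ a : Fin (m + 2) → Fin n,
      (∑ b : Fin (m + 2) → Fin n, ∑ σ : Equiv.Perm (Fin (m + 2)),
        if b = a ∘ σ then (∏ t, phi w i j t (a t)) * ∏ t, phi w k l t (b t) else 0)
      = ∑ σ : Equiv.Perm (Fin (m + 2)), ∏ t, (phi w i j t (a t) * phi w k l (σ.symm t) (a t)) := by
    intro a
    rw [Finset.sum_comm]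
    refine Finset.sum_congr rfl fun σ _ => ?_
    rw [Finset.sum_ite_eq' Finset.univ (a ∘ σ), if_pos (Finset.mem_univ _),
      Finset.prod_mul_distrib]
    congr 1
    rw [← Equiv.prod_comp σ (fun t => phi w k l (σ.symm t) (a t))]
    simp
  rw [Finset.sum_congr rfl fun a _ => hswap a]
  rw [Finset.sum_comm]
  have hprod : ∀ σ : Equiv.Perm (Fin (m + 2)),
      (∑ a : Fin (m + 2) → Fin n, ∏ t, (phi w i j t (a t) * phi w k l (σ.symm t) (a t)))
      = ∏ t, ∑ x, phi w i j t x * phi w k l (σ.symm t) x := by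
    intro σ
    rw [Finset.prod_univ_sum, Fintype.piFinset_univ]
  simp only [hprod]
  have hinv := Equiv.sum_comp (Equiv.inv (Equiv.Perm (Fin (m + 2))))
    (fun σ => ∏ t, ∑ x, phi (m := m) w i j t x * phi (m := m) w k l (σ t) x)
  have hinv' : (∑ σ : Equiv.Perm (Fin (m + 2)),
      ∏ t, ∑ x, phi (m := m) w i j t x * phi (m := m) w k l (σ.symm t) x)
      = ∑ σ : Equiv.Perm (Fin (m + 2)),
      ∏ t, ∑ x, phi (m := m) w i j t x * phi (m := m) w k l (σ t) x := hinv
  rw [hinv']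
  simp only [Fin.prod_univ_succ (n := m + 1), Fin.prod_univ_succ (n := m), Fin.succ_zero_eq_one]
  have p0 : ∀ i j, phi (m := m) w i j 0 = fun x => if x = i then 1 else 0 := fun i j => rfl
  have p1 : ∀ i j, phi (m := m) w i j 1 = fun x => if x = j then 1 else 0 := fun i j => rfl
  have := perm_eval (m := m) (fun s => ∑ x, phi (m := m) w i j 0 x * phi (m := m) w k l s x)
    (fun s => ∑ x, phi (m := m) w i j 1 x * phi (m := m) w k l s x)
    (fun s => ∑ x, w x * phi (m := m) w k l s x) (w i) (w j)
    (by intro t; simp [phi]) (by intro t; simp only [p1]; simp [phi])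
    (by intro t; simp [phi, ← pow_two, hw])
  have hphi : ∀ s : Fin m, phi (m := m) w i j s.succ.succ = w := fun s => by simp [phi]
  simp only [hphi]
  rw [this]
  simp only [p0, p1]
  have d1 : ∀ i k : Fin n, (∑ x, (if x = i then (1 : ℝ) else 0) * (if x = k then (1 : ℝ) else 0))
      = if i = k then 1 else 0 := by
    intro i k
    rw [Finset.sum_eq_single i]
    · simp
    · intro x _ hx; simp [hx]
    · simp
  have d2 : ∀ k : Fin n, (∑ x, w x * (if x = k then (1 : ℝ) else 0)) = w k := by intro k; simp
  simp only [d1, d2]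
  have hf : ((m + 2).factorial : ℝ) = (m + 2) * (m + 1) * m.factorial := by
    rw [Nat.factorial_succ, Nat.factorial_succ]; push_cast; ring
  have h0 : (m.factorial : ℝ) ≠ 0 := by exact_mod_cast m.factorial_ne_zero
  rw [hf]
  push_cast
  field_simp

/-- **The covariance structure of a pure contraction** `M = G·w^{⊗(r−2)}` of a GOTE(r,n)
tensor, for pairwise distinct indices `i, j, k, l` and `α² = (r−2)(r−3)/(r−1)`,
`β² = (r−2)/(r−1)`, `θ² = 1/(r−1)`. -/
theorem cov_structure_pure_contraction
    (r n : ℕ) (hr : 3 ≤ r) (hn : 4 ≤ n)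
    (w : Fin n → ℝ) (hw : ∑ i, w i ^ 2 = 1)
    (i j k l : Fin n)
    (hij : i ≠ j) (hik : i ≠ k) (hil : i ≠ l) (hjk : j ≠ k) (hjl : j ≠ l) (hkl : k ≠ l) :
    var (goteMeasure r n) (fun ω => pureContraction ω w i i)
        = 2 * (1 / ((r : ℝ) - 1)) + 4 * (((r : ℝ) - 2) / ((r : ℝ) - 1)) * w i ^ 2
          + ((r : ℝ) - 2) * ((r : ℝ) - 3) / ((r : ℝ) - 1) * w i ^ 4
    ∧ var (goteMeasure r n) (fun ω => pureContraction ω w i j)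
        = 1 / ((r : ℝ) - 1) + (((r : ℝ) - 2) / ((r : ℝ) - 1)) * (w i ^ 2 + w j ^ 2)
          + ((r : ℝ) - 2) * ((r : ℝ) - 3) / ((r : ℝ) - 1) * (w i ^ 2 * w j ^ 2)
    ∧ covar (goteMeasure r n) (fun ω => pureContraction ω w i j)
        (fun ω => pureContraction ω w k l)
        = ((r : ℝ) - 2) * ((r : ℝ) - 3) / ((r : ℝ) - 1) * (w i * w j * w k * w l)
    ∧ covar (goteMeasure r n) (fun ω => pureContraction ω w i i)
        (fun ω => pureContraction ω w k l)
        = ((r : ℝ) - 2) * ((r : ℝ) - 3) / ((r : ℝ) - 1) * (w i ^ 2 * w k * w l)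
    ∧ covar (goteMeasure r n) (fun ω => pureContraction ω w i i)
        (fun ω => pureContraction ω w k k)
        = ((r : ℝ) - 2) * ((r : ℝ) - 3) / ((r : ℝ) - 1) * (w i ^ 2 * w k ^ 2)
    ∧ covar (goteMeasure r n) (fun ω => pureContraction ω w i j)
        (fun ω => pureContraction ω w i l)
        = (((r : ℝ) - 2) / ((r : ℝ) - 1)) * (w j * w l)
          + ((r : ℝ) - 2) * ((r : ℝ) - 3) / ((r : ℝ) - 1) * (w i ^ 2 * w j * w l)
    ∧ covar (goteMeasure r n) (fun ω => pureContraction ω w i i)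
        (fun ω => pureContraction ω w i l)
        = 2 * (((r : ℝ) - 2) / ((r : ℝ) - 1)) * (w i * w l)
          + ((r : ℝ) - 2) * ((r : ℝ) - 3) / ((r : ℝ) - 1) * (w i ^ 3 * w l) := by
  obtain ⟨m, rfl⟩ : ∃ m, r = m + 2 := ⟨r - 2, by omega⟩
  have hm : (m : ℝ) + 1 ≠ 0 := by positivity
  have hm' : (m : ℝ) + 2 - 1 ≠ 0 := by
    have : (m : ℝ) + 2 - 1 = m + 1 := by ring
    rwa [this]
  unfold var
  simp only [cov_general w hw, if_true, if_neg hij, if_neg hik, if_neg hil, if_neg hjk, if_neg hjl,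
    if_neg hkl, if_neg hij.symm, if_neg hik.symm, if_neg hil.symm, if_neg hjk.symm,
    if_neg hjl.symm, if_neg hkl.symm]
  push_cast
  refine ⟨?_, ?_, ?_, ?_, ?_, ?_, ?_⟩ <;> field_simp <;> ring
end
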